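/- arXiv:2106.12661 — 2 statements merged into one kernel-verified Lean document; each statement's English description precedes it below -/
import Mathlib

section
/- Let H be a real separable Hilbert space, d ≥ 1 with d < dim H, and let P_0 be a d-plane in H. For k ∈ ℕ set r_k = 10^{-k}, let {x_{j,k}}_{j∈J_k} ⊆ H satisfy |x_{i,k} − x_{j,k}| ≥ r_k for distinct i, j ∈ J_k, set B_{j,k} = B(x_{j,k}, r_k), and let P_{j,k} be a d-plane with x_{j,k} ∈ P_{j,k}. Define ε_k(x) = sup{ d_{B(x_{i,l},10^4 r_l)}(P_{j,k}, P_{i,l}) : j ∈ J_k, |l−k| ≤ 2, i ∈ J_l, x ∈ 100B_{j,k} ∩ 100B_{i,l} }. There exists ε_0 > 0 depending only on d such that if 0 < ε < ε_0 and (a) x_{j,k} ∈ ⋃_{i∈J_{k−1}} 2B_{i,k−1} for all k ≥ 1 and j ∈ J_k, (b) dist(x_{j,0}, P_0) ≤ ε for all j ∈ J_0, (c) d_{B(x_{j,0},100)}(P_{j,0}, P_0) ≤ ε for all j ∈ J_0, and (d) ε_k(x_{j,k}) < ε for all k ≥ 0 and j ∈ J_k, then there exist τ ∈ (0,1), a constant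 C depending only on d, a constant c(d) > 0, and an injective continuous map f : P_0 → H such that: (1) |f(x) − x| ≤ Cε for all x ∈ P_0; (2) (1/4)|x−y|^{1+τ} ≤ |f(x) − f(y)| ≤ 10|x−y|^{1−τ} whenever x, y ∈ P_0 and |x−y| ≤ 1; (3) E_∞ := ⋂_{K≥1} closure( ⋃_{k≥K} {x_{j,k} : j ∈ J_k} ) ⊆ Σ := f(P_0); (4) Σ is Cε-Reifenberg flat: for every z ∈ Σ and t ∈ (0,1) there is a d-plane P with d_{B(z,t)}(Σ, P) ≤ Cε; (5) 𝓗^d_∞(Σ ∩ B(x,r)) ≥ c(d) r^d for all x ∈ Σ and r > 0. -/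
open Metric Set MeasureTheory
open scoped ENNReal NNReal Classical

noncomputable section

variable {H : Type*} [NormedAddCommGroup H] [InnerProductSpace ℝ H]

/-- A `d`-plane: a `d`-dimensional affine subspace of `H`. -/
def IsDPlane (d : ℕ) (P : Set H) : Prop :=
  ∃ (x : H) (W : Submodule ℝ H), Module.finrank ℝ W = d ∧ P = (fun w => x + w) '' (W : Set H)

/-- `d`-dimensional Hausdorff content `𝓗^d_∞`. -/
def hContent (d : ℕ) (A : Set H) : ℝ≥0∞ :=
  ⨅ (t : ℕ → Set H) (_ : A ⊆ ⋃ n, t n), ∑' n, EMetric.diam (t n) ^ (d : ℝ)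

/-- Normalized local Hausdorff distance between `E` and `F` relative to the ball `B(x,r)`. -/
def dBall (x : H) (r : ℝ) (E F : Set H) : ℝ :=
  r⁻¹ * max (⨆ y ∈ E ∩ closedBall x r, infDist y F) (⨆ y ∈ F ∩ closedBall x r, infDist y E)

/-- `β_E^{d,p}(B(x,r), P)`. -/
def betaPl (d : ℕ) (p : ℝ) (E : Set H) (x : H) (r : ℝ) (P : Set H) : ℝ≥0∞ :=
  ((ENNReal.ofReal r ^ d)⁻¹ *
      ∫⁻ t in Ioo (0 : ℝ) 1,
        hContent d {y | y ∈ E ∩ closedBall x r ∧ t * r < infDist y P} *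
          ENNReal.ofReal (t ^ (p - 1))) ^ (1 / p)

/-- `β_E^{d,p}(B(x,r))`: infimum of `β_E^{d,p}(B(x,r), P)` over all `d`-planes `P`. -/
def betaInf (d : ℕ) (p : ℝ) (E : Set H) (x : H) (r : ℝ) : ℝ≥0∞ :=
  ⨅ (P : Set H) (_ : IsDPlane d P), betaPl d p E x r P

/-- Choquet integral of `f` over `A` against the Hausdorff content `𝓗^d_∞`. -/
def choquet (d : ℕ) (A : Set H) (f : H → ℝ) : ℝ≥0∞ :=
  ∫⁻ t in Ioi (0 : ℝ), hContent d {x | x ∈ A ∧ t < f x}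

/-- Choquet integral of `f^p` over `A` against the Hausdorff content `𝓗^d_∞`. -/
def choquetPow (d : ℕ) (p : ℝ) (A : Set H) (f : H → ℝ) : ℝ≥0∞ :=
  ∫⁻ t in Ioi (0 : ℝ), hContent d {x | x ∈ A ∧ t < f x} * ENNReal.ofReal (t ^ (p - 1))

/-- A Christ–David cube system for `E ⊆ H`, with parameters `c₀, ρ ∈ (0,1)`. A cube
`Q ∈ cubes k` has side length `ℓ(Q) = 5ρᵏ` and centre `center k Q`. -/
structure ChristDavid (E : Set H) where
  c₀ : ℝ
  ρ : ℝ
  c₀_pos : 0 < c₀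
  c₀_lt_one : c₀ < 1
  ρ_pos : 0 < ρ
  ρ_lt_one : ρ < 1
  cubes : ℤ → Set (Set H)
  center : ℤ → Set H → H
  subset_E : ∀ k Q, Q ∈ cubes k → Q ⊆ E
  nested : ∀ k l Q R, Q ∈ cubes k → R ∈ cubes l → (Q ∩ R).Nonempty → Q ⊆ R ∨ R ⊆ Q
  center_mem : ∀ k Q, Q ∈ cubes k → center k Q ∈ E
  ball_subset : ∀ k Q, Q ∈ cubes k →
    E ∩ closedBall (center k Q) (c₀ * (5 * ρ ^ k)) ⊆ Q
  subset_ball : ∀ k Q, Q ∈ cubes k → Q ⊆ closedBall (center k Q) (5 * ρ ^ k)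
  covers : ∀ k, E ⊆ ⋃ Q ∈ cubes k, closedBall (center k Q) (5 * ρ ^ k)

namespace ChristDavid

variable {E : Set H}

/-- Sum of a quantity over all cubes of a Christ–David cube system. -/
def sumCubes (D : ChristDavid E) (F : ℤ → Set H → ℝ≥0∞) : ℝ≥0∞ :=
  ∑' (k : ℤ), ∑' (Q : D.cubes k), F k (Q : Set H)

/-- `Q ∈ BWGL(A, ε)`: the set `E` is `ε`-far from every `d`-plane in `A B_Q`. -/
def inBWGL (D : ChristDavid E) (d : ℕ) (A ε : ℝ) (k : ℤ) (Q : Set H) : Prop :=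
  ∀ P : Set H, IsDPlane d P → ε ≤ dBall (D.center k Q) (A * (5 * D.ρ ^ k)) E P

/-- `BWGL(Q₀, A, ε) = Σ { ℓ(R)^d : R ⊆ Q₀, R ∈ BWGL(A,ε) }`. -/
def bwglSum (D : ChristDavid E) (d : ℕ) (A ε : ℝ) (Q₀ : Set H) : ℝ≥0∞ :=
  D.sumCubes fun k Q =>
    if Q ⊆ Q₀ ∧ D.inBWGL d A ε k Q then ENNReal.ofReal (5 * D.ρ ^ k) ^ d else 0

/-- `Σ_{Q ⊆ Q₀} β_E^{d,p}(C₀ B_Q)² ℓ(Q)^d`. -/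
def betaSum (D : ChristDavid E) (d : ℕ) (p C₀ : ℝ) (Q₀ : Set H) : ℝ≥0∞ :=
  D.sumCubes fun k Q =>
    if Q ⊆ Q₀ then
      betaInf d p E (D.center k Q) (C₀ * (5 * D.ρ ^ k)) ^ 2 *
        ENNReal.ofReal (5 * D.ρ ^ k) ^ d
    else 0

/-- `E` satisfies the bilateral weak geometric lemma. -/
def SatisfiesBWGL (D : ChristDavid E) (d : ℕ) : Prop :=
  ∀ A ε : ℝ, 1 ≤ A → 0 < ε → ∃ C : ℝ, 0 < C ∧
    ∀ (k₀ : ℤ), ∀ Q₀ ∈ D.cubes k₀,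
      D.bwglSum d A ε Q₀ ≤ ENNReal.ofReal C * ENNReal.ofReal (5 * D.ρ ^ k₀) ^ d

end ChristDavid

/-- Lower content `d`-regularity with constant `c`. -/
def LowerContentRegular (d : ℕ) (c : ℝ) (E : Set H) : Prop :=
  ∀ x ∈ E, ∀ r : ℝ, 0 < r → ENNReal.ofReal r < EMetric.diam E →
    ENNReal.ofReal (c * r ^ d) ≤ hContent d (E ∩ closedBall x r)

/-- Ahlfors `d`-regularity with constant `A₀`. -/
def AhlforsRegular [MeasurableSpace H] [BorelSpace H] (d : ℕ) (A₀ : ℝ) (E : Set H) : Prop :=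
  ∀ x ∈ E, ∀ r : ℝ, 0 < r → ENNReal.ofReal r < EMetric.diam E →
    ENNReal.ofReal (r ^ d / A₀) ≤ μH[(d : ℝ)] (E ∩ closedBall x r) ∧
      μH[(d : ℝ)] (E ∩ closedBall x r) ≤ ENNReal.ofReal (A₀ * r ^ d)

/-- Uniform `d`-rectifiability: Ahlfors `d`-regularity together with big pieces of
Lipschitz images of `ℝ^d`. -/
def UniformlyRectifiable [MeasurableSpace H] [BorelSpace H] (d : ℕ) (E : Set H) : Prop :=
  (∃ A₀ : ℝ, 1 ≤ A₀ ∧ AhlforsRegular d A₀ E) ∧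
    ∃ L θ : ℝ, 0 < L ∧ 0 < θ ∧
      ∀ x ∈ E, ∀ r : ℝ, 0 < r → ENNReal.ofReal r < EMetric.diam E →
        ∃ f : EuclideanSpace ℝ (Fin d) → H,
          LipschitzWith (Real.toNNReal L) f ∧
            ENNReal.ofReal (θ * r ^ d) ≤
              μH[(d : ℝ)] (E ∩ closedBall x r ∩ f '' closedBall 0 r)

/-- `(ε, d, δ₀)`-Reifenberg flatness. -/
def ReifenbergFlat (ε : ℝ) (d : ℕ) (δ₀ : ℝ) (E : Set H) : Prop :=
  ∀ x ∈ E, ∀ r : ℝ, 0 < r → r < δ₀ →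
    ∃ P : Set H, IsDPlane d P ∧ dBall x r E P ≤ ε

end

/-- The radius `r_k = 10^{-k}`. -/
noncomputable def radK (k : ℕ) : ℝ := (10 : ℝ)⁻¹ ^ k

/-! Each generation of centres and planes is turned into a map of `H`, which averages the orthogonal
projections onto the planes with respect to a partition of unity subordinate to the balls. Starting
from `P₀`, these maps are composed one after the other. By induction, the image of `P₀` at the
`k`-th stage is a flat Lipschitz graph at scale `10⁻ᵏ` around each of its points, and near the
centres it is an even flatter graph over the planes attached to them, so that the induction does not
lose flatness: away from the centres nothing moves, and near them the averaged projection resets the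
graph. That the image of a graph is again a full graph, without holes, is a consequence of
Brouwer's fixed point theorem.

The `k`-th map moves points by at most a small multiple of `10⁻ᵏ` and distorts distances at that
scale by a factor close to `1`. Hence the compositions converge geometrically to a map `f`, and two
points stay under control until their distance is comparable to `10⁻ᵏ`, which gives the bi-Hölder
bounds. Flatness of `f(P₀)` at scale `10⁻ᵏ` is inherited from the `k`-th stage. For the lower
content bound, Brouwer's theorem shows once more that the projection of `f(P₀) ∩ B(x, r)` onto a
suitable plane covers a `d`-dimensional disc of radius comparable to `r`. -/

/-! ### Brouwer's fixed point theorem -/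

section RadialRetraction

variable {E : Type*} [NormedAddCommGroup E] [NormedSpace ℝ E] {R : ℝ}

/-- The radial retraction of a normed space onto its closed ball of radius `R` about `0`. -/
noncomputable def radialRetract (R : ℝ) (x : E) : E :=
  (R / max R ‖x‖) • x

theorem radialRetract_of_norm_le (hR : 0 < R) {x : E} (hx : ‖x‖ ≤ R) : radialRetract R x = x := by
  rw [radialRetract, max_eq_left hx, div_self hR.ne', one_smul]

theorem norm_radialRetract_of_le_norm (hR : 0 < R) {x : E} (hx : R ≤ ‖x‖) :
    ‖radialRetract R x‖ = R := by
  rw [radialRetract, max_eq_right hx, norm_smul, norm_div, norm_norm, Real.norm_of_nonneg hR.le,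
    div_mul_cancel₀ _ (hR.trans_le hx).ne']

theorem radialRetract_mem_closedBall (hR : 0 < R) (x : E) :
    radialRetract R x ∈ closedBall (0 : E) R := by
  rw [mem_closedBall_zero_iff]
  rcases le_total ‖x‖ R with h | h
  · rwa [radialRetract_of_norm_le hR h]
  · exact (norm_radialRetract_of_le_norm hR h).le

theorem lipschitzWith_radialRetract (hR : 0 < R) :
    LipschitzWith 2 (radialRetract R : E → E) := by
  refine LipschitzWith.of_dist_le_mul fun x y => ?_
  set a := max R ‖x‖ with ha_def
  set b := max R ‖y‖ with hb_def
  have ha : 0 < a := hR.trans_le (le_max_left _ _)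
  have hb : 0 < b := hR.trans_le (le_max_left _ _)
  have hRa : R / a ≤ 1 := (div_le_one ha).2 (le_max_left _ _)
  have hab : |b - a| ≤ ‖x - y‖ := by
    calc |b - a| ≤ |‖y‖ - ‖x‖| := by
          simpa only [sub_self, abs_zero, max_eq_right (abs_nonneg (‖y‖ - ‖x‖))] using
            abs_max_sub_max_le_max R ‖y‖ R ‖x‖
      _ ≤ ‖x - y‖ := norm_sub_rev x y ▸ abs_norm_sub_norm_le y x
  have hy : |b - a| / b * ‖y‖ ≤ ‖x - y‖ := by
    rw [div_mul_eq_mul_div, div_le_iff₀ hb]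
    exact mul_le_mul hab (le_max_right _ _) (norm_nonneg _) (norm_nonneg _)
  have hsplit : radialRetract R x - radialRetract R y =
      (R / a) • ((x - y) + ((b - a) / b) • y) := by
    have hcoeff : R / a * ((b - a) / b) = R / a - R / b := by field_simp
    rw [smul_add, smul_smul, hcoeff, radialRetract, radialRetract, ← ha_def, ← hb_def]
    module
  rw [dist_eq_norm, dist_eq_norm, hsplit, norm_smul, Real.norm_of_nonneg (by positivity)]
  calc R / a * ‖(x - y) + ((b - a) / b) • y‖ ≤ 1 * (‖x - y‖ + |b - a| / b * ‖y‖) := by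
        refine mul_le_mul hRa ((norm_add_le _ _).trans_eq ?_) (norm_nonneg _) zero_le_one
        rw [norm_smul, Real.norm_eq_abs, abs_div, abs_of_pos hb]
    _ ≤ ((2 : ℝ≥0) : ℝ) * ‖x - y‖ := by rw [NNReal.coe_two]; linarith

end RadialRetraction

theorem bijective_id_add_of_lipschitzWith {E : Type*} [NormedAddCommGroup E] [CompleteSpace E]
    {h : E → E} {K : ℝ≥0} (hh : LipschitzWith K h) (hK : K < 1) :
    Function.Bijective fun x => x + h x := by
  refine ⟨fun x y hxy => ?_, fun z => ?_⟩
  · have hK' : (K : ℝ) < 1 := hK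
    have hdist : dist x y = dist (h x) (h y) := by
      rw [dist_comm (h x), dist_eq_norm, dist_eq_norm]
      exact congrArg norm (sub_eq_sub_iff_add_eq_add.2 (hxy.trans (add_comm _ _)))
    have hlip := hdist.trans_le (hh.dist_le_mul x y)
    exact dist_le_zero.1 (by nlinarith [hK', hlip, dist_nonneg (x := x) (y := y)])
  · have hc : ContractingWith K fun x => z - h x :=
      ⟨hK, LipschitzWith.of_dist_le_mul fun x y => by
        rw [dist_sub_left]; exact hh.dist_le_mul x y⟩
    exact ⟨hc.fixedPoint, eq_sub_iff_add_eq.1 hc.fixedPoint_isFixedPt.symm⟩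

/- Extended by zero, the perturbation is globally a contraction, so `id + g` extends to a bijection
of `E` that is the identity off the ball. -/
theorem bijOn_closedBall_id_add {E : Type*} [NormedAddCommGroup E] [NormedSpace ℝ E]
    [CompleteSpace E] {g : E → E} {R : ℝ} {K : ℝ≥0} (hR : 0 < R)
    (hg : LipschitzOnWith K g (closedBall 0 R)) (hK : K * 2 < 1) (hg0 : ∀ x ∈ sphere 0 R, g x = 0) :
    BijOn (fun x => x + g x) (closedBall 0 R) (closedBall 0 R) := by
  set h : E → E := g ∘ radialRetract R
  have hh : LipschitzWith (K * 2) h := lipschitzOnWith_univ.1 <|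
    hg.comp (lipschitzWith_radialRetract hR).lipschitzOnWith
      fun x _ => radialRetract_mem_closedBall hR x
  have hin : ∀ x ∈ closedBall 0 R, h x = g x := fun x hx =>
    congrArg g (radialRetract_of_norm_le hR (mem_closedBall_zero_iff.1 hx))
  have hout : ∀ x ∉ closedBall 0 R, h x = 0 := fun x hx =>
    hg0 _ (mem_sphere_zero_iff_norm.2 (norm_radialRetract_of_le_norm hR
      (not_le.1 fun hle => hx (mem_closedBall_zero_iff.2 hle)).le))
  obtain ⟨hinj, hsurj⟩ := bijective_id_add_of_lipschitzWith hh hK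
  have hbij : BijOn (fun x => x + h x) (closedBall 0 R) (closedBall 0 R) := by
    refine ⟨fun x hx => ?_, hinj.injOn, fun z hz => ?_⟩
    · by_contra hz
      have hfix : x + h x = x := hinj (by simp only [hout _ hz, add_zero])
      exact hz (hfix.symm.subst (motive := (· ∈ closedBall 0 R)) hx)
    · obtain ⟨x, rfl⟩ := hsurj z
      refine ⟨x, not_not.1 fun hx => hx ?_, rfl⟩
      simpa only [hout x hx, add_zero] using hz
  exact hbij.congr fun x hx => by simp only [hin x hx]

section Determinant

variable {E : Type*} [NormedAddCommGroup E] [NormedSpace ℝ E] [FiniteDimensional ℝ E]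

theorem continuousLinearMap_det_one_add_pos {A : E →L[ℝ] E} (hA : ‖A‖ < 1) : 0 < (1 + A).det := by
  have hne : ∀ s ∈ Icc (0 : ℝ) 1, (1 + s • A).det ≠ 0 := by
    intro s hs
    have hnorm : ‖-(s • A)‖ < 1 := by
      rw [norm_neg, norm_smul, Real.norm_of_nonneg hs.1]
      exact (mul_le_of_le_one_left (norm_nonneg A) hs.2).trans_lt hA
    have hunit : IsUnit (1 + s • A) := by
      simpa only [sub_neg_eq_add] using isUnit_one_sub_of_norm_lt_one hnorm
    exact (LinearMap.isUnit_det _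
      (ContinuousLinearMap.isUnit_iff_isUnit_toLinearMap.1 hunit)).ne_zero
  have hcont : Continuous fun s : ℝ => (1 + s • A).det :=
    ContinuousLinearMap.continuous_det.comp (by fun_prop)
  have hzero : (1 + (0 : ℝ) • A).det = 1 := by
    rw [zero_smul, add_zero]; exact LinearMap.det_id
  by_contra hneg
  obtain ⟨s, hs, hs0⟩ := intermediate_value_Icc' zero_le_one hcont.continuousOn
    (show (0 : ℝ) ∈ Icc _ _ by rw [one_smul, hzero]; exact ⟨not_lt.1 hneg, zero_le_one⟩)
  exact hne s hs hs0

open Polynomial in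
theorem exists_polynomial_eval_eq_det_one_add_smul (A : E →L[ℝ] E) :
    ∃ p : ℝ[X], p.natDegree ≤ Module.finrank ℝ E ∧ ∀ t, p.eval t = (1 + t • A).det := by
  let b := Module.finBasis ℝ E
  let M := LinearMap.toMatrix b b (A : E →ₗ[ℝ] E)
  refine ⟨((X : ℝ[X]) • M.map C + (1 : Matrix _ _ ℝ).map C).det, ?_, fun t => ?_⟩
  · simpa only [Fintype.card_fin] using Polynomial.natDegree_det_X_add_C_le M 1
  · change evalRingHom t _ = LinearMap.det ((1 + t • A : E →L[ℝ] E) : E →ₗ[ℝ] E)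
    rw [RingHom.map_det, ← LinearMap.det_toMatrix b]
    congr 1
    ext i j
    simp only [RingHom.mapMatrix_apply, Matrix.map_apply, Matrix.add_apply, Matrix.smul_apply,
      smul_eq_mul, coe_evalRingHom, eval_mul, eval_X, eval_C,
      ContinuousLinearMap.toLinearMap_add, ContinuousLinearMap.toLinearMap_one,
      ContinuousLinearMap.toLinearMap_smul, map_add, LinearMap.toMatrix_one, map_smul]
    rw [add_comm]

/- By Lagrange interpolation a polynomial of bounded degree is a fixed linear combination of its
values at finitely many nodes, and integration commutes with that combination. -/
theorem integral_det_one_add_smul_eq_of_forall_mem_Icc {α : Type*} [MeasurableSpace α]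
    {μ : Measure α} {A : α → E →L[ℝ] E} {t₀ c : ℝ} (ht₀ : 0 < t₀)
    (hint : ∀ t : ℝ, Integrable (fun x => (1 + t • A x).det) μ)
    (hc : ∀ t ∈ Icc 0 t₀, ∫ x, (1 + t • A x).det ∂μ = c) (s : ℝ) :
    ∫ x, (1 + s • A x).det ∂μ = c := by
  set n := Module.finrank ℝ E
  let node : ℕ → ℝ := fun i => t₀ * (i / (n + 1))
  have hnode : Function.Injective node := fun i j hij => by
    have hquot := mul_left_cancel₀ ht₀.ne' hij
    exact_mod_cast (div_left_inj' (by positivity)).1 hquot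
  have hmem : ∀ i ∈ Finset.range (n + 1), node i ∈ Icc 0 t₀ := fun i hi => by
    refine ⟨by positivity, mul_le_of_le_one_right ht₀.le ((div_le_one (by positivity)).2 ?_)⟩
    exact_mod_cast (Finset.mem_range.1 hi).le
  let w : ℕ → ℝ := fun i => (Lagrange.basis (Finset.range (n + 1)) node i).eval s
  have hw : ∑ i ∈ Finset.range (n + 1), w i = 1 := by
    rw [← Polynomial.eval_finsetSum, Lagrange.sum_basis hnode.injOn Finset.nonempty_range_add_one,
      Polynomial.eval_one]
  have hinterp : ∀ x, (1 + s • A x).det =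
      ∑ i ∈ Finset.range (n + 1), (1 + node i • A x).det * w i := fun x => by
    obtain ⟨p, hdeg, hp⟩ := exists_polynomial_eval_eq_det_one_add_smul (A x)
    have hlt : p.degree < (Finset.range (n + 1)).card := by
      rw [Finset.card_range]
      exact p.degree_le_natDegree.trans_lt (by exact_mod_cast Nat.lt_succ_of_le hdeg)
    rw [← hp s, Lagrange.eq_interpolate_of_eval_eq (fun i => (1 + node i • A x).det)
      hnode.injOn hlt fun i _ => hp _, Lagrange.interpolate_apply, Polynomial.eval_finsetSum]
    simp only [Polynomial.eval_mul, Polynomial.eval_C, w]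
  simp_rw [hinterp]
  rw [integral_finsetSum _ fun i _ => (hint (node i)).mul_const _]
  simp_rw [integral_mul_const]
  rw [Finset.sum_congr rfl fun i hi => by rw [hc _ (hmem i hi)], ← Finset.mul_sum, hw, mul_one]

theorem setIntegral_det_one_add_fderiv_eq [MeasurableSpace E] [BorelSpace E] (μ : Measure E)
    [μ.IsAddHaarMeasure] {g : E → E} {R : ℝ} {K : ℝ≥0} (hR : 0 < R) (hg : Differentiable ℝ g)
    (hgK : ∀ x ∈ closedBall 0 R, ‖fderiv ℝ g x‖ ≤ K) (hK : K * 2 < 1)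
    (hg0 : ∀ x ∈ sphere 0 R, g x = 0) :
    ∫ x in closedBall 0 R, (1 + fderiv ℝ g x).det ∂μ = μ.real (closedBall 0 R) := by
  have hlip : LipschitzOnWith K g (closedBall 0 R) :=
    (convex_closedBall (0 : E) R).lipschitzOnWith_of_nnnorm_fderiv_le (fun x _ => hg x) hgK
  have hbij := bijOn_closedBall_id_add hR hlip hK hg0
  have hK1 : (K : ℝ) < 1 := by
    have : (K : ℝ) * 2 < 1 := hK
    linarith [K.coe_nonneg]
  have hchange := integral_image_eq_integral_abs_det_fderiv_smul μ measurableSet_closedBall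
    (fun x _ => ((hasFDerivAt_id x).add (hg x).hasFDerivAt).hasFDerivWithinAt) hbij.injOn
    fun _ => (1 : ℝ)
  change ∫ _ in (fun x => x + g x) '' closedBall 0 R, (1 : ℝ) ∂μ = _ at hchange
  rw [hbij.image_eq, setIntegral_const, smul_eq_mul, mul_one] at hchange
  rw [hchange]
  refine setIntegral_congr_fun measurableSet_closedBall fun x hx => ?_
  simp only [smul_eq_mul, mul_one]
  exact (abs_of_pos (continuousLinearMap_det_one_add_pos ((hgK x hx).trans_lt hK1))).symm

end Determinant

section Brouwer

variable {E : Type*} [NormedAddCommGroup E] [InnerProductSpace ℝ E] [FiniteDimensional ℝ E]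

theorem det_fderiv_eq_zero_of_norm_eq {G : E → E} {x : E} {R : ℝ} (hG : DifferentiableAt ℝ G x)
    (hR : 0 < R) (hnorm : ∀ y, ‖G y‖ = R) : (fderiv ℝ G x).det = 0 := by
  have hderiv := hG.hasFDerivAt.norm_sq
  simp only [hnorm] at hderiv
  have hzero := hderiv.unique (hasFDerivAt_const (R ^ 2) x)
  by_contra hdet
  obtain ⟨v, hv⟩ :=
    ((fderiv ℝ G x).toContinuousLinearEquivOfDetNeZero hdet).surjective (G x)
  have hv : fderiv ℝ G x v = G x := hv
  have happly := congrArg (fun L => L v) hzero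
  simp only [smul_apply, ContinuousLinearMap.comp_apply, hv,
    innerSL_apply_apply, real_inner_self_eq_norm_sq, hnorm, zero_apply,
    smul_eq_zero, OfNat.ofNat_ne_zero, false_or] at happly
  exact (pow_pos hR 2).ne' happly

/- With `g = G - id`, the integral of `det (id + t g')` over the ball is a polynomial in `t`; it is
the volume of the ball for small `t`, hence for all `t`, yet it vanishes at `t = 1`. -/
theorem exists_mem_sphere_ne_of_norm_eq {G : E → E} {R : ℝ} (hR : 0 < R) (hG : ContDiff ℝ 1 G)
    (hnorm : ∀ x, ‖G x‖ = R) : ∃ x ∈ sphere 0 R, G x ≠ x := by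
  by_contra! hfix
  borelize E
  set g : E → E := fun x => G x - x
  have hg : ContDiff ℝ 1 g := hG.sub contDiff_id
  have hgd : Differentiable ℝ g := hg.differentiable one_ne_zero
  have hgc : Continuous (fderiv ℝ g) := hg.continuous_fderiv one_ne_zero
  obtain ⟨K, hK⟩ : ∃ K, ∀ x ∈ closedBall (0 : E) R, ‖fderiv ℝ g x‖ ≤ K :=
    (isCompact_closedBall (0 : E) R).exists_bound_of_continuousOn hgc.continuousOn
  have hK0 : 0 ≤ K := (norm_nonneg _).trans (hK 0 (mem_closedBall_self hR.le))
  have ht₀ : 0 < 1 / (2 * (K + 1)) := by positivity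
  have hsmall : ∀ t ∈ Icc 0 (1 / (2 * (K + 1))), ∫ x in closedBall 0 R,
      (1 + t • fderiv ℝ g x).det = volume.real (closedBall (0 : E) R) := by
    intro t ht
    have htK : t * K * 2 < 1 := by
      have := (le_div_iff₀ (by positivity)).1 ht.2
      rcases ht.1.eq_or_lt with rfl | htpos
      · norm_num
      · linarith
    have hderiv : ∀ x, fderiv ℝ (fun y => t • g y) x = t • fderiv ℝ g x := fun x =>
      fderiv_fun_const_smul (hgd x) t
    simp_rw [← hderiv]
    refine setIntegral_det_one_add_fderiv_eq volume hR (K := ⟨t * K, mul_nonneg ht.1 hK0⟩)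
      (hgd.fun_const_smul t) (fun x hx => ?_) htK fun x hx => ?_
    · rw [hderiv, norm_smul, Real.norm_of_nonneg ht.1]
      exact mul_le_mul_of_nonneg_left (hK x hx) ht.1
    · simp only [g, hfix x hx, sub_self, smul_zero]
  have hint : ∀ t : ℝ, IntegrableOn (fun x => (1 + t • fderiv ℝ g x).det) (closedBall 0 R) :=
    fun t => (ContinuousLinearMap.continuous_det.comp
      (by fun_prop)).continuousOn.integrableOn_compact (isCompact_closedBall 0 R)
  have hone := integral_det_one_add_smul_eq_of_forall_mem_Icc ht₀ hint hsmall 1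
  have hdet : ∀ x, (1 + (1 : ℝ) • fderiv ℝ g x).det = 0 := fun x => by
    have hGd := hG.differentiable one_ne_zero x
    have hg' : fderiv ℝ g x = fderiv ℝ G x - 1 :=
      (hGd.hasFDerivAt.sub (hasFDerivAt_id x)).fderiv
    rw [one_smul, hg', add_sub_cancel, det_fderiv_eq_zero_of_norm_eq hGd hR hnorm]
  simp only [hdet, integral_zero] at hone
  exact (ENNReal.toReal_pos (measure_closedBall_pos volume (0 : E) hR).ne'
    (isCompact_closedBall _ _).measure_ne_top).ne hone

theorem exists_fixedPoint_of_hasCompactSupport {v : E → E} (hv : ContDiff ℝ 1 v)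
    (hsupp : HasCompactSupport v) : ∃ x, v x = x := by
  by_contra! hne
  obtain ⟨R, hR, hvR⟩ : ∃ R, 0 < R ∧ ∀ x ∈ sphere 0 R, v x = 0 := by
    obtain ⟨R, hR, hsub⟩ := hsupp.isBounded.subset_ball_lt 0 0
    refine ⟨R, hR, fun x hx => image_eq_zero_of_notMem_tsupport fun hmem => ?_⟩
    exact (mem_ball.1 (hsub hmem)).ne hx
  set F : E → E := fun x => x - v x
  have hF : ContDiff ℝ 1 F := contDiff_id.sub hv
  have hF0 : ∀ x, ‖F x‖ ≠ 0 := fun x => norm_ne_zero_iff.2 (sub_ne_zero.2 (hne x).symm)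
  have hFn : ContDiff ℝ 1 fun x => ‖F x‖ := hF.norm ℝ fun x => norm_ne_zero_iff.1 (hF0 x)
  obtain ⟨x, hx, hGx⟩ := exists_mem_sphere_ne_of_norm_eq (G := fun x => (R / ‖F x‖) • F x) hR
    ((contDiff_const.div hFn hF0).smul hF) fun x => by
      rw [norm_smul, norm_div, norm_norm, Real.norm_of_nonneg hR.le, div_mul_cancel₀ _ (hF0 x)]
  refine hGx ?_
  simp only [F, hvR x hx, sub_zero, mem_sphere_zero_iff_norm.1 hx, div_self hR.ne', one_smul]

theorem exists_fixedPoint_of_mapsTo_closedBall {u : E → E} {R : ℝ} (hR : 0 < R)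
    (hu : ContinuousOn u (closedBall 0 R)) (hmaps : MapsTo u (closedBall 0 R) (closedBall 0 R)) :
    ∃ x ∈ closedBall 0 R, u x = x := by
  by_contra! hne
  set U : E → E := u ∘ radialRetract R
  have hUcont : UniformContinuous U := by
    rw [← uniformContinuousOn_univ]
    exact ((isCompact_closedBall (0 : E) R).uniformContinuousOn_of_continuous hu).comp
      (lipschitzWith_radialRetract hR).uniformContinuous.uniformContinuousOn
      fun x _ => radialRetract_mem_closedBall hR x
  have hUle : ∀ x, ‖U x‖ ≤ R := fun x =>
    mem_closedBall_zero_iff.1 (hmaps (radialRetract_mem_closedBall hR x))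
  have hUne : ∀ x ∈ closedBall (0 : E) (R + 1), 0 < ‖U x - x‖ := by
    intro x _
    rw [norm_pos_iff, sub_ne_zero]
    intro hx
    have hxR : ‖x‖ ≤ R := hx ▸ hUle x
    refine hne x (mem_closedBall_zero_iff.2 hxR) ?_
    simpa only [U, Function.comp_apply, radialRetract_of_norm_le hR hxR] using hx
  obtain ⟨η, hη, hηU⟩ := (isCompact_closedBall (0 : E) (R + 1)).exists_forall_le'
    (hUcont.continuous.sub continuous_id).norm.continuousOn hUne
  obtain ⟨g, hg, hgU⟩ := hUcont.exists_contDiff_dist_le (lt_min hη one_pos)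
  have hgle : ∀ x, ‖g x‖ ≤ R + 1 := fun x => by
    have hdist := (hgU x).le.trans (min_le_right η 1)
    rw [dist_eq_norm] at hdist
    linarith [norm_le_norm_add_norm_sub' (g x) (U x), hUle x]
  let χ : ContDiffBump (0 : E) := ⟨R + 1, R + 2, by linarith, by linarith⟩
  obtain ⟨x, hx⟩ := exists_fixedPoint_of_hasCompactSupport (v := fun x => χ x • g x)
    (χ.contDiff.smul (hg.of_le (by exact_mod_cast le_top))) χ.hasCompactSupport.smul_right
  have hxR : x ∈ closedBall 0 (R + 1) := by
    rw [mem_closedBall_zero_iff, ← hx, norm_smul, Real.norm_of_nonneg χ.nonneg]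
    exact (mul_le_of_le_one_left (norm_nonneg _) χ.le_one).trans (hgle x)
  have hgx : g x = x := by rwa [χ.one_of_mem_closedBall hxR, one_smul] at hx
  have hclose := (hgU x).trans_le (min_le_left η 1)
  rw [hgx, dist_comm, dist_eq_norm] at hclose
  exact hclose.not_ge (hηU x hxR)

theorem exists_eq_of_norm_sub_le {h : E → E} {R δ : ℝ} {p : E} (hR : 0 < R)
    (hc : ContinuousOn h (closedBall 0 R)) (hδ : ∀ x ∈ closedBall 0 R, ‖h x - x‖ ≤ δ)
    (hp : ‖p‖ + δ ≤ R) : ∃ x ∈ closedBall 0 R, h x = p := by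
  obtain ⟨x, hx, hfix⟩ := exists_fixedPoint_of_mapsTo_closedBall (u := fun x => p - (h x - x)) hR
    (continuousOn_const.sub (hc.sub continuousOn_id)) fun x hx => by
      rw [mem_closedBall_zero_iff]
      exact (norm_sub_le _ _).trans ((add_le_add_right (hδ x hx) _).trans hp)
  rw [sub_sub_eq_add_sub, sub_eq_iff_eq_add, add_comm p, add_left_cancel_iff] at hfix
  exact ⟨x, hx, hfix.symm⟩

end Brouwer

/-! ### Planes and their direction projections -/

section Planes

variable {H : Type*} [NormedAddCommGroup H] [InnerProductSpace ℝ H]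

/-- `Q` is the orthogonal projection onto a `d`-dimensional linear subspace of `H`. Directions of
`d`-planes are recorded by such operators rather than by subspaces, so that the operator norm
`‖Q - Q'‖` measures the angle between two directions. -/
def IsDProj (d : ℕ) (Q : H →L[ℝ] H) : Prop :=
  ∃ (W : Submodule ℝ H) (_ : FiniteDimensional ℝ W), Module.finrank ℝ W = d ∧
    Q = W.starProjection

/-- `P` is a `d`-plane whose direction is the range of the orthogonal projection `Q`. -/
structure HasDirection (d : ℕ) (P : Set H) (Q : H →L[ℝ] H) : Prop where
  isDProj : IsDProj d Q
  nonempty : P.Nonempty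
  mem_iff : ∀ {p}, p ∈ P → ∀ {y}, y ∈ P ↔ Q (y - p) = y - p

variable {d : ℕ} {P P' : Set H} {Q Q' : H →L[ℝ] H}

namespace IsDProj

theorem apply_apply (hQ : IsDProj d Q) (v : H) : Q (Q v) = Q v := by
  obtain ⟨W, _, -, rfl⟩ := hQ
  exact Submodule.starProjection_eq_self_iff.2 (W.starProjection_apply_mem v)

theorem norm_apply_le (hQ : IsDProj d Q) (v : H) : ‖Q v‖ ≤ ‖v‖ := by
  obtain ⟨W, _, -, rfl⟩ := hQ
  exact W.norm_starProjection_apply_le v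

theorem norm_sub_apply_le (hQ : IsDProj d Q) (v : H) : ‖v - Q v‖ ≤ ‖v‖ := by
  obtain ⟨W, _, -, rfl⟩ := hQ
  simpa only [Submodule.starProjection_orthogonal_val] using Wᗮ.norm_starProjection_apply_le v

theorem inner_apply_left (hQ : IsDProj d Q) (v w : H) : inner ℝ (Q v) w = inner ℝ v (Q w) := by
  obtain ⟨W, _, -, rfl⟩ := hQ
  exact W.inner_starProjection_left_eq_right v w

theorem norm_apply_sub_apply_le (hQ : IsDProj d Q) (hQ' : IsDProj d Q') {c : ℝ} (hc : 0 ≤ c)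
    (h : ∀ v, Q v = v → ‖v - Q' v‖ ≤ c * ‖v‖) (v : H) : ‖Q (v - Q' v)‖ ≤ c * ‖v‖ := by
  set z := Q (v - Q' v) with hz
  rcases (norm_nonneg z).eq_or_lt with h0 | hpos
  · rw [← h0]; positivity
  have hQz : Q z = z := hQ.apply_apply _
  have hzz : ‖z‖ ^ 2 = inner ℝ v (z - Q' z) := by
    calc ‖z‖ ^ 2 = inner ℝ (v - Q' v) (Q z) := by
          rw [← hQ.inner_apply_left, ← hz, real_inner_self_eq_norm_sq]
      _ = inner ℝ v (z - Q' z) := by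
          rw [hQz, inner_sub_left, inner_sub_right, hQ'.inner_apply_left]
  refine le_of_mul_le_mul_right ?_ hpos
  calc ‖z‖ * ‖z‖ = inner ℝ v (z - Q' z) := by rw [← hzz, sq]
    _ ≤ ‖v‖ * ‖z - Q' z‖ := real_inner_le_norm _ _
    _ ≤ ‖v‖ * (c * ‖z‖) := by gcongr; exact h z hQz
    _ = c * ‖v‖ * ‖z‖ := by ring

theorem norm_sub_le (hQ : IsDProj d Q) (hQ' : IsDProj d Q') {c : ℝ} (hc : 0 ≤ c)
    (h : ∀ v, Q v = v → ‖v - Q' v‖ ≤ c * ‖v‖) (h' : ∀ v, Q' v = v → ‖v - Q v‖ ≤ c * ‖v‖) :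
    ‖Q - Q'‖ ≤ 2 * c := by
  refine ContinuousLinearMap.opNorm_le_bound _ (by positivity) fun v => ?_
  have hsplit : (Q - Q') v = Q (v - Q' v) - (Q' v - Q (Q' v)) := by
    simp only [sub_apply, map_sub]; abel
  have hQ'v : ‖Q' v - Q (Q' v)‖ ≤ c * ‖v‖ :=
    (h' _ (hQ'.apply_apply v)).trans (mul_le_mul_of_nonneg_left (hQ'.norm_apply_le v) hc)
  rw [hsplit]
  linarith [_root_.norm_sub_le (Q (v - Q' v)) (Q' v - Q (Q' v)),
    hQ.norm_apply_sub_apply_le hQ' hc h v]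

theorem exists_apply_eq_of_norm_sub_le (hQ : IsDProj d Q) {g : H → H} {R δ : ℝ} (hR : 0 < R)
    (hg : ContinuousOn g {w | Q w = w ∧ ‖w‖ ≤ R})
    (hδ : ∀ w, Q w = w → ‖w‖ ≤ R → ‖Q (g w) - w‖ ≤ δ) {p : H} (hQp : Q p = p)
    (hp : ‖p‖ + δ ≤ R) : ∃ w, Q w = w ∧ ‖w‖ ≤ R ∧ Q (g w) = p := by
  obtain ⟨W, _, -, rfl⟩ := hQ
  have hW (w : W) : W.starProjection (w : H) = w := Submodule.starProjection_eq_self_iff.2 w.2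
  have hcont : ContinuousOn (fun w : W => W.orthogonalProjectionOnto (g w)) (closedBall 0 R) :=
    W.orthogonalProjectionOnto.continuous.comp_continuousOn <|
      hg.comp continuous_subtype_val.continuousOn fun w hw => ⟨hW w, by simpa using hw⟩
  obtain ⟨x, hx, hxp⟩ := exists_eq_of_norm_sub_le hR hcont
    (fun x hx => hδ x (hW x) (by simpa using hx))
    (p := ⟨p, Submodule.starProjection_eq_self_iff.1 hQp⟩) hp
  exact ⟨x, hW x, by simpa using hx, congrArg Subtype.val hxp⟩

theorem exists_isometry (hQ : IsDProj d Q) :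
    ∃ (φ : H →L[ℝ] EuclideanSpace ℝ (Fin d)) (ψ : EuclideanSpace ℝ (Fin d) →L[ℝ] H),
      (∀ x, ‖φ x‖ = ‖Q x‖) ∧ (∀ x, ‖ψ x‖ = ‖x‖) ∧ (∀ x, Q (ψ x) = ψ x) ∧
      ∀ x, ψ (φ x) = Q x := by
  obtain ⟨W, _, hW, rfl⟩ := hQ
  have e := ((stdOrthonormalBasis ℝ W).reindex (finCongr hW)).repr
  refine ⟨e.toLinearIsometry.toContinuousLinearMap ∘L W.orthogonalProjectionOnto,
    W.subtypeL ∘L e.symm.toLinearIsometry.toContinuousLinearMap, fun x => ?_, fun x => ?_,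
    fun x => ?_, fun x => ?_⟩
  · exact e.norm_map _
  · exact e.symm.norm_map x
  · exact Submodule.starProjection_eq_self_iff.2 (Subtype.mem _)
  · simp

theorem hasDirection (hQ : IsDProj d Q) (z : H) :
    HasDirection d {y | Q (y - z) = y - z} Q where
  isDProj := hQ
  nonempty := ⟨z, by simp⟩
  mem_iff {p} hp {y} := by
    have hp : Q (p - z) = p - z := hp
    rw [mem_ofPred_eq, ← sub_add_sub_cancel y p z, map_add, hp, add_left_inj]

end IsDProj

theorem IsDPlane.exists_hasDirection (hd : 1 ≤ d) (hP : IsDPlane d P) :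
    ∃ Q : H →L[ℝ] H, HasDirection d P Q := by
  obtain ⟨x, W, hW, rfl⟩ := hP
  have : FiniteDimensional ℝ W := Module.finite_of_finrank_pos (by omega)
  have hQ : IsDProj d W.starProjection := ⟨W, this, hW, rfl⟩
  convert Exists.intro W.starProjection (hQ.hasDirection x) using 3
  ext y
  rw [mem_ofPred_eq, Submodule.starProjection_eq_self_iff]
  exact ⟨fun ⟨w, hw, hy⟩ => by simpa [← hy] using hw, fun hy => ⟨y - x, hy, by simp⟩⟩

namespace HasDirection

theorem isDPlane (hP : HasDirection d P Q) : IsDPlane d P := by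
  obtain ⟨p, hp⟩ := hP.nonempty
  obtain ⟨W, _, hW, hQ⟩ := hP.isDProj
  refine ⟨p, W, hW, ext fun y => ?_⟩
  rw [hP.mem_iff hp, hQ, Submodule.starProjection_eq_self_iff]
  exact ⟨fun hy => ⟨y - p, hy, by simp⟩, fun ⟨w, hw, hy⟩ => by simpa [← hy] using hw⟩

theorem add_mem (hP : HasDirection d P Q) {p v : H} (hp : p ∈ P) (hv : Q v = v) : p + v ∈ P := by
  rwa [hP.mem_iff hp, add_sub_cancel_left]

theorem add_apply_mem (hP : HasDirection d P Q) {p : H} (hp : p ∈ P) (v : H) : p + Q v ∈ P :=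
  hP.add_mem hp (hP.isDProj.apply_apply v)

theorem infDist_eq (hP : HasDirection d P Q) {p : H} (hp : p ∈ P) (y : H) :
    infDist y P = ‖(y - p) - Q (y - p)‖ := by
  apply le_antisymm
  · refine (infDist_le_dist_of_mem (hP.add_apply_mem hp (y - p))).trans_eq ?_
    rw [dist_eq_norm, sub_sub]
  · refine (le_infDist hP.nonempty).2 fun z hz => ?_
    have hyz : (y - p) - Q (y - p) = (y - z) - Q (y - z) := by
      rw [← sub_add_sub_cancel y z p, map_add, (hP.mem_iff hp).1 hz]; abel
    rw [hyz, dist_eq_norm]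
    exact hP.isDProj.norm_sub_apply_le _

end HasDirection

end Planes

section LocalDistance

variable {H : Type*} [NormedAddCommGroup H] {E F : Set H} {x : H} {r c : ℝ}

theorem dBall_comm (x : H) (r : ℝ) (E F : Set H) : dBall x r E F = dBall x r F E := by
  rw [dBall, dBall, max_comm]

theorem infDist_le_of_dBall_le (hr : 0 < r) (hF : F.Nonempty) (h : dBall x r E F ≤ c) {y : H}
    (hy : y ∈ E) (hyx : dist y x ≤ r) : infDist y F ≤ c * r := by
  obtain ⟨z, hz⟩ := hF
  rw [dBall, inv_mul_le_iff₀ hr, mul_comm] at h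
  have hbdd : BddAbove (range fun y => ⨆ _ : y ∈ E ∩ closedBall x r, infDist y F) := by
    refine ⟨r + dist x z, forall_mem_range.2 fun y => Real.iSup_le (fun hy => ?_) (by positivity)⟩
    linarith [infDist_le_dist_of_mem (x := y) hz, dist_triangle y x z, mem_closedBall.1 hy.2]
  have : Nonempty (y ∈ E ∩ closedBall x r) := ⟨⟨hy, hyx⟩⟩
  calc infDist y F = ⨆ _ : y ∈ E ∩ closedBall x r, infDist y F := ciSup_const.symm
    _ ≤ ⨆ y ∈ E ∩ closedBall x r, infDist y F := le_ciSup hbdd y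
    _ ≤ c * r := (le_max_left _ _).trans h

theorem infDist_le_of_dBall_le' (hr : 0 < r) (hE : E.Nonempty) (h : dBall x r E F ≤ c) {y : H}
    (hy : y ∈ F) (hyx : dist y x ≤ r) : infDist y E ≤ c * r :=
  infDist_le_of_dBall_le hr hE (dBall_comm x r E F ▸ h) hy hyx

theorem dBall_le (hr : 0 < r) (hc : 0 ≤ c) (hE : ∀ y ∈ E, dist y x ≤ r → infDist y F ≤ c * r)
    (hF : ∀ y ∈ F, dist y x ≤ r → infDist y E ≤ c * r) : dBall x r E F ≤ c := by
  rw [dBall, inv_mul_le_iff₀ hr, mul_comm]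
  have hcr : 0 ≤ c * r := by positivity
  exact max_le (Real.iSup_le (fun y => Real.iSup_le (fun hy => hE y hy.1 hy.2) hcr) hcr)
    (Real.iSup_le (fun y => Real.iSup_le (fun hy => hF y hy.1 hy.2) hcr) hcr)

end LocalDistance

namespace HasDirection

variable {H : Type*} [NormedAddCommGroup H] [InnerProductSpace ℝ H]
  {d : ℕ} {P P' : Set H} {Q Q' : H →L[ℝ] H}

theorem norm_sub_apply_mul_le (hP : HasDirection d P Q) (hP' : HasDirection d P' Q')
    {a : H} {ρ η : ℝ} (hρ : 0 < ρ) (ha : a ∈ P)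
    (h : ∀ y ∈ P, dist y a ≤ ρ → infDist y P' ≤ η) {v : H} (hv : Q v = v) :
    ‖v - Q' v‖ * ρ ≤ 2 * η * ‖v‖ := by
  obtain ⟨b, hb⟩ := hP'.nonempty
  rcases (norm_nonneg v).eq_or_lt with h0 | hpos
  · rw [norm_eq_zero.1 h0.symm]; simp
  set s := ρ / ‖v‖
  have hs : ‖s • v‖ = ρ := by
    rw [norm_smul, Real.norm_of_nonneg (by positivity), div_mul_cancel₀ _ hpos.ne']
  have hsv : Q (s • v) = s • v := by rw [map_smul, hv]
  have hfar := h _ (hP.add_mem ha hsv) (by rw [dist_self_add_left, hs])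
  have hnear := h a ha (by simpa using hρ.le)
  rw [hP'.infDist_eq hb] at hfar hnear
  have hsplit : s • (v - Q' v) = ((a + s • v - b) - Q' (a + s • v - b)) -
      ((a - b) - Q' (a - b)) := by
    simp only [map_sub, map_add, map_smul, smul_sub]; abel
  have hle : ‖s • (v - Q' v)‖ ≤ 2 * η := by
    rw [hsplit]
    linarith [norm_sub_le ((a + s • v - b) - Q' (a + s • v - b)) ((a - b) - Q' (a - b))]
  rwa [norm_smul, Real.norm_of_nonneg (by positivity), div_mul_eq_mul_div, div_le_iff₀ hpos,
    mul_comm ρ] at hle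

theorem norm_sub_le_of_dBall_le (hP : HasDirection d P Q) (hP' : HasDirection d P' Q')
    {u : H} (hu : u ∈ P') {R c : ℝ} (hR : 0 < R) (hc : c ≤ 1 / 3) (h : dBall u R P P' ≤ c) :
    ‖Q - Q'‖ ≤ 6 * c := by
  have hnear : ∀ y ∈ P, dist y u ≤ R → infDist y P' ≤ c * R := fun y =>
    infDist_le_of_dBall_le hR hP'.nonempty h
  have hnear' : ∀ y ∈ P', dist y u ≤ R → infDist y P ≤ c * R := fun y =>
    infDist_le_of_dBall_le' hR hP.nonempty h
  obtain ⟨p, hp⟩ := hP.nonempty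
  have hau : dist (p + Q (u - p)) u ≤ c * R := by
    rw [dist_comm, dist_eq_norm, ← sub_sub, ← hP.infDist_eq hp]
    exact hnear' u hu (by simpa using hR.le)
  have hc0 : 0 ≤ c := nonneg_of_mul_nonneg_left (dist_nonneg.trans hau) hR
  have hdir := hP.isDProj.norm_sub_le hP'.isDProj (c := 3 * c) (by positivity) (fun v hv => ?_)
    fun v hv => ?_
  · linarith
  · have h1 := hP.norm_sub_apply_mul_le hP' (ρ := (1 - c) * R) (mul_pos (by linarith) hR)
      (hP.add_apply_mem hp (u - p)) (fun y hy hya => hnear y hy <| by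
        linarith [dist_triangle y (p + Q (u - p)) u]) hv
    refine le_of_mul_le_mul_right (h1.trans ?_) (mul_pos (by linarith : 0 < 1 - c) hR)
    nlinarith [mul_nonneg (mul_nonneg hc0 hR.le) (norm_nonneg v)]
  · have h1 := hP'.norm_sub_apply_mul_le hP hR hu hnear' hv
    refine le_of_mul_le_mul_right (h1.trans ?_) hR
    nlinarith [mul_nonneg (mul_nonneg hc0 hR.le) (norm_nonneg v)]

end HasDirection

/-! ### Lipschitz graphs over planes -/

section Graphs

variable {H : Type*} [NormedAddCommGroup H] [InnerProductSpace ℝ H]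
  {d : ℕ} {S : Set H} {y : H} {Q Q' : H →L[ℝ] H} {a a' r : ℝ}

theorem IsDProj.eq_of_apply_eq {c : ℝ} (hc : c < 1) (hQQ : ‖Q' - Q‖ ≤ c) {v w : H}
    (hv : Q' v = v) (hw : Q' w = w) (h : Q v = Q w) : v = w := by
  have hvw := (Q' - Q).le_of_opNorm_le hQQ (v - w)
  rw [sub_apply, map_sub, map_sub, hv, hw, h, sub_self, sub_zero] at hvw
  refine sub_eq_zero.1 (norm_eq_zero.1 ?_)
  nlinarith [norm_nonneg (v - w)]

theorem IsDProj.exists_apply_eq_of_norm_sub_sub_le (hQ : IsDProj d Q) (hQ' : IsDProj d Q') {c κ : ℝ}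
    (hc : c < 1) (hQQ : ‖Q' - Q‖ ≤ c) (hκ : 0 ≤ κ) {g : H → H} {R : ℝ} (hR : 0 < R) (hg0 : g 0 = 0)
    (hg : ∀ v w, Q v = v → ‖v‖ ≤ R → Q w = w → ‖w‖ ≤ R →
      ‖(g v - g w) - (v - w)‖ ≤ κ * ‖v - w‖)
    {p : H} (hp : Q' p = p) (hpR : ‖p‖ + (c * (1 + κ) + κ) * R ≤ R) :
    ∃ w, Q w = w ∧ ‖w‖ ≤ R ∧ Q' (g w) = p := by
  have hcont : ContinuousOn g {w | Q w = w ∧ ‖w‖ ≤ R} :=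
    ApproximatesLinearOn.continuousOn (f' := .id ℝ H) (c := ⟨κ, hκ⟩)
      fun v hv w hw => hg v w hv.1 hv.2 hw.1 hw.2
  have hgw (w) (hw : Q w = w) (hwR : ‖w‖ ≤ R) : ‖g w - w‖ ≤ κ * R := by
    have h := hg w 0 hw hwR (map_zero Q) (by simpa using hR.le)
    rw [hg0, sub_zero, sub_zero] at h
    exact h.trans (mul_le_mul_of_nonneg_left hwR hκ)
  have hQg (w) (hw : Q w = w) (hwR : ‖w‖ ≤ R) : ‖Q (Q' (g w)) - w‖ ≤ (c * (1 + κ) + κ) * R := by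
    have hc0 : 0 ≤ c := (norm_nonneg _).trans hQQ
    have hgR : ‖g w‖ ≤ (1 + κ) * R := by linarith [norm_sub_norm_le (g w) w, hgw w hw hwR]
    have hsplit : Q (Q' (g w)) - w = Q ((Q' - Q) (g w)) + Q (g w - w) := by
      rw [sub_apply, map_sub, map_sub, hQ.apply_apply, hw]; abel
    calc ‖Q (Q' (g w)) - w‖ ≤ ‖(Q' - Q) (g w)‖ + ‖g w - w‖ := by
          rw [hsplit]
          exact norm_add_le_of_le (hQ.norm_apply_le _) (hQ.norm_apply_le _)
      _ ≤ c * ((1 + κ) * R) + κ * R :=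
          add_le_add (((Q' - Q).le_of_opNorm_le hQQ _).trans (by gcongr)) (hgw w hw hwR)
      _ = (c * (1 + κ) + κ) * R := by ring
  obtain ⟨w, hw, hwR, hwp⟩ := hQ.exists_apply_eq_of_norm_sub_le hR
    (Q'.continuous.comp_continuousOn hcont) hQg (hQ.apply_apply p)
    ((add_le_add_left (hQ.norm_apply_le p) _).trans hpR)
  exact ⟨w, hw, hwR, IsDProj.eq_of_apply_eq hc hQQ (hQ'.apply_apply _) hp hwp⟩

/-- Near `y`, at scale `r`, the set `S` is the graph of an `a`-flat function over the range of
the projection `Q`: all its chords are almost fixed by `Q`, and it projects onto a disk. -/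
structure IsGraph (S : Set H) (y : H) (Q : H →L[ℝ] H) (a r : ℝ) : Prop where
  cone : ∀ u ∈ S, ∀ v ∈ S, dist u y ≤ 4 * r → dist v y ≤ 4 * r →
    ‖(u - v) - Q (u - v)‖ ≤ a * ‖u - v‖
  full : ∀ w, Q w = w → ‖w‖ ≤ 3 * r → ∃ u ∈ S, dist u y ≤ 4 * r ∧ Q (u - y) = w

/-- Near each of its points, at scale `r`, the set `S` is a `b`-flat graph over some `d`-plane. -/
def IsGraphical (d : ℕ) (S : Set H) (b r : ℝ) : Prop :=
  ∀ y ∈ S, ∃ Q, IsDProj d Q ∧ IsGraph S y Q b r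

namespace IsGraph

theorem mono (h : IsGraph S y Q a r) (haa : a ≤ a') : IsGraph S y Q a' r where
  cone u hu v hv hu' hv' := (h.cone u hu v hv hu' hv').trans
    (mul_le_mul_of_nonneg_right haa (norm_nonneg _))
  full := h.full

theorem exists_section (h : IsGraph S y Q a r) (hy : y ∈ S) (hr : 0 ≤ r) (ha : a ≤ 1 / 100) :
    ∃ A : H → H, A 0 = y ∧ (∀ w, Q w = w → ‖w‖ ≤ 3 * r → A w ∈ S ∧ Q (A w - y) = w) ∧
      ∀ v w, Q v = v → ‖v‖ ≤ 3 * r → Q w = w → ‖w‖ ≤ 3 * r →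
        ‖(A v - A w) - (v - w)‖ ≤ 1 / 50 * ‖v - w‖ := by
  choose! A hAS hAy hQA using h.full
  have h3r : ‖(0 : H)‖ ≤ 3 * r := by rw [norm_zero]; positivity
  have hA0 : A 0 = y := by
    have hcone := h.cone _ (hAS 0 (map_zero Q) h3r) y hy (hAy 0 (map_zero Q) h3r)
      (by rw [dist_self]; positivity)
    rw [hQA 0 (map_zero Q) h3r, sub_zero] at hcone
    refine sub_eq_zero.1 (norm_eq_zero.1 ?_)
    nlinarith [norm_nonneg (A 0 - y)]
  refine ⟨A, hA0, fun w hw hwr => ⟨hAS w hw hwr, hQA w hw hwr⟩, fun v w hv hvr hw hwr => ?_⟩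
  have hcone := h.cone _ (hAS v hv hvr) _ (hAS w hw hwr) (hAy v hv hvr) (hAy w hw hwr)
  rw [show Q (A v - A w) = v - w by
    rw [← sub_sub_sub_cancel_right _ _ y, map_sub, hQA v hv hvr, hQA w hw hwr]] at hcone
  have hAvw := norm_sub_norm_le (A v - A w) (v - w)
  linarith [norm_nonneg (v - w), mul_le_mul_of_nonneg_right ha (norm_nonneg (A v - A w))]

theorem exists_image (h : IsGraph S y Q a r) (hQ : IsDProj d Q) (hQ' : IsDProj d Q')
    (hQQ : ‖Q' - Q‖ ≤ 1 / 100) (hy : y ∈ S) (hr : 0 < r) (ha : a ≤ 1 / 100) {σ : H → H}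
    (hσ : ∀ u ∈ S, ∀ v ∈ S, dist u y ≤ r → dist v y ≤ r →
      ‖(σ u - σ v) - (u - v)‖ ≤ 1 / 100 * ‖u - v‖)
    {w : H} (hw : Q' w = w) (hwr : ‖w‖ ≤ 3 * (r / 10)) :
    ∃ u ∈ S, dist (σ u) (σ y) ≤ 4 * (r / 10) ∧ Q' (σ u - σ y) = w := by
  obtain ⟨A, hA0, hA, hAid⟩ := h.exists_section hy hr.le ha
  have hAid (v w) (hv : Q v = v) (hvr : ‖v‖ ≤ 32 / 100 * r) (hw : Q w = w)
      (hwr : ‖w‖ ≤ 32 / 100 * r) := hAid v w hv (by linarith) hw (by linarith)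
  have h0r : ‖(0 : H)‖ ≤ 32 / 100 * r := by rw [norm_zero]; positivity
  have hAy (v) (hv : Q v = v) (hvr : ‖v‖ ≤ 32 / 100 * r) : dist (A v) y ≤ r := by
    have h0 := hAid v 0 hv hvr (map_zero Q) h0r
    rw [hA0, sub_zero] at h0
    rw [dist_eq_norm]
    linarith [norm_sub_norm_le (A v - y) v]
  have hσA (v w) (hv : Q v = v) (hvr : ‖v‖ ≤ 32 / 100 * r) (hw : Q w = w)
      (hwr : ‖w‖ ≤ 32 / 100 * r) :
      ‖(σ (A v) - σ (A w)) - (v - w)‖ ≤ 1 / 30 * ‖v - w‖ := by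
    have h1 := hσ _ (hA v hv (by linarith)).1 _ (hA w hw (by linarith)).1 (hAy v hv hvr)
      (hAy w hw hwr)
    have h2 := hAid v w hv hvr hw hwr
    have h3 := norm_sub_norm_le (A v - A w) (v - w)
    have h4 := norm_sub_le_norm_sub_add_norm_sub (σ (A v) - σ (A w)) (A v - A w) (v - w)
    linarith [norm_nonneg (v - w)]
  obtain ⟨v, hv, hvr, hvw⟩ := hQ.exists_apply_eq_of_norm_sub_sub_le hQ' (by norm_num) hQQ
    (κ := 1 / 30) (g := fun v => σ (A v) - σ y) (R := 32 / 100 * r) (by norm_num) (by positivity)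
    (by rw [hA0, sub_self])
    (fun v w hv hvr hw hwr => by
      rw [sub_sub_sub_cancel_right]; exact hσA v w hv hvr hw hwr)
    hw (by linarith)
  refine ⟨A v, (hA v hv (by linarith)).1, ?_, hvw⟩
  have h0 := hσA v 0 hv hvr (map_zero Q) h0r
  rw [hA0, sub_zero] at h0
  rw [dist_eq_norm]
  linarith [norm_sub_norm_le (σ (A v) - σ y) v]

theorem image (h : IsGraph S y Q a r) (hQ : IsDProj d Q) (hQ' : IsDProj d Q')
    (hQQ : ‖Q' - Q‖ ≤ 1 / 100) (hy : y ∈ S) (hr : 0 < r) (ha : a ≤ 1 / 100) {σ : H → H}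
    (hσ : ∀ u ∈ S, ∀ v ∈ S, dist u y ≤ r → dist v y ≤ r →
      ‖(σ u - σ v) - (u - v)‖ ≤ 1 / 100 * ‖u - v‖)
    (hσi : ∀ u ∈ S, dist (σ u) u ≤ 1 / 10 * r)
    (hcone : ∀ u ∈ S, ∀ v ∈ S, dist u y ≤ r → dist v y ≤ r →
      ‖(σ u - σ v) - Q' (σ u - σ v)‖ ≤ a' * ‖σ u - σ v‖) :
    IsGraph (σ '' S) (σ y) Q' a' (r / 10) where
  cone := by
    have hdist (u) (hu : u ∈ S) (hσu : dist (σ u) (σ y) ≤ 4 * (r / 10)) : dist u y ≤ r := by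
      have hσu' := dist_comm u (σ u)
      linarith [dist_triangle4 u (σ u) (σ y) y, hσi u hu, hσi y hy]
    rintro _ ⟨u, hu, rfl⟩ _ ⟨v, hv, rfl⟩ hu' hv'
    exact hcone u hu v hv (hdist u hu hu') (hdist v hv hv')
  full w hw hwr := by
    obtain ⟨u, hu, huy, huw⟩ := h.exists_image hQ hQ' hQQ hy hr ha hσ hw hwr
    exact ⟨σ u, mem_image_of_mem σ hu, huy, huw⟩

end IsGraph

end Graphs

/-! ### Flat nets -/

section FlatNets

variable {H : Type*} [NormedAddCommGroup H] [InnerProductSpace ℝ H]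

/-- The planes through the points `p ∈ X` in the directions `Q p` and those through the points
`q ∈ X'` in the directions `Q' q` nearly agree at scale `r`. -/
structure IsCompatible (X X' : Set H) (Q Q' : H → H →L[ℝ] H) (r δ : ℝ) : Prop where
  angle : ∀ p ∈ X, ∀ q ∈ X', dist q p ≤ 100 * r → ‖Q p - Q' q‖ ≤ δ
  flat : ∀ p ∈ X, ∀ q ∈ X', dist q p ≤ 100 * r → ‖(q - p) - Q p (q - p)‖ ≤ δ * r

/-- An `r`-separated set `X` together with `d`-planes through its points, given by their direction
projections `Q`, which nearly agree at scale `r`: one generation of a coherent collection of balls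
and planes. -/
structure IsFlatNet (d : ℕ) (X : Set H) (Q : H → H →L[ℝ] H) (r δ : ℝ) : Prop
    extends IsCompatible X X Q Q r δ where
  r_pos : 0 < r
  δ_le : δ ≤ 1 / 4
  isDProj : ∀ p ∈ X, IsDProj d (Q p)
  separated : ∀ p ∈ X, ∀ q ∈ X, p ≠ q → r ≤ dist p q

theorem packingNumber_ne_top_of_totallyBounded {E : Type*} [PseudoEMetricSpace E] {A : Set E}
    (hA : TotallyBounded A) {ε : ℝ≥0} (hε : ε ≠ 0) : packingNumber ε A ≠ ⊤ := by
  obtain ⟨C, -, hC, hcover⟩ := exists_finite_isCover_of_totallyBounded (half_pos hε.bot_lt).ne' hA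
  refine ne_top_of_le_ne_top hC.encard_lt_top.ne ?_
  rw [← mul_div_cancel₀ ε two_ne_zero]
  exact (packingNumber_two_mul_le_externalCoveringNumber _ _).trans
    hcover.externalCoveringNumber_le_encard

/-- A bound for the number of points of a `d`-dimensional flat net at scale `r` in a ball of
radius `11 * r`. -/
noncomputable def packingConst (d : ℕ) : ℕ :=
  (packingNumber (1 / 4) (closedBall (0 : EuclideanSpace ℝ (Fin d)) 22)).toNat

theorem encard_le_packingConst {d : ℕ} {A : Set (EuclideanSpace ℝ (Fin d))}
    (hA : A ⊆ closedBall 0 22) (hsep : ∀ x ∈ A, ∀ y ∈ A, x ≠ y → 1 / 2 ≤ dist x y) :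
    A.encard ≤ packingConst d := by
  rw [packingConst, ENat.natCast_toNat <| packingNumber_ne_top_of_totallyBounded
    (isCompact_closedBall _ _).totallyBounded (by norm_num)]
  refine IsSeparated.encard_le_packingNumber hA fun x hx y hy hxy => ?_
  change ((1 / 4 : ℝ≥0) : ℝ≥0∞) < edist x y
  rw [edist_nndist, ENNReal.coe_lt_coe, ← NNReal.coe_lt_coe, coe_nndist]
  refine lt_of_lt_of_le ?_ (hsep x hx y hy hxy)
  norm_num

variable {d : ℕ} {X : Set H} {Q : H → H →L[ℝ] H} {r δ : ℝ} {p p' q : H}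

namespace IsFlatNet

theorem half_le_norm_apply_sub (h : IsFlatNet d X Q r δ) (hq : q ∈ X) (hp : p ∈ X) (hp' : p' ∈ X)
    (hne : p ≠ p') (hpq : dist p q ≤ 100 * r) (hpq' : dist p' q ≤ 100 * r) :
    r / 2 ≤ ‖Q q (p - p')‖ := by
  have hsep := h.separated p hp p' hp' hne
  have hflat := h.flat q hq p hp hpq
  have hflat' := h.flat q hq p' hp' hpq'
  have hδr := mul_le_mul_of_nonneg_right h.δ_le h.r_pos.le
  have hsplit : p - p' =
      Q q (p - p') + (((p - q) - Q q (p - q)) - ((p' - q) - Q q (p' - q))) := by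
    simp only [map_sub]; abel
  rw [dist_eq_norm, hsplit] at hsep
  linarith [norm_add_le (Q q (p - p')) (((p - q) - Q q (p - q)) - ((p' - q) - Q q (p' - q))),
    norm_sub_le ((p - q) - Q q (p - q)) ((p' - q) - Q q (p' - q))]

theorem encard_inter_closedBall_le (h : IsFlatNet d X Q r δ) (y : H) :
    (X ∩ closedBall y (11 * r)).encard ≤ packingConst d := by
  rcases (X ∩ closedBall y (11 * r)).eq_empty_or_nonempty with hempty | ⟨q, hqX, hqy⟩
  · rw [hempty, encard_empty]; exact zero_le
  obtain ⟨φ, -, hφ, -⟩ := (h.isDProj q hqX).exists_isometry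
  have hr := h.r_pos
  have hq22 {p} (hp : p ∈ X ∩ closedBall y (11 * r)) : dist p q ≤ 22 * r := by
    linarith [dist_triangle_right p q y, mem_closedBall.1 hp.2, mem_closedBall.1 hqy]
  have hdist (p p' : H) : dist (r⁻¹ • φ (p - q)) (r⁻¹ • φ (p' - q)) = ‖Q q (p - p')‖ / r := by
    rw [dist_smul₀, dist_eq_norm, ← map_sub, sub_sub_sub_cancel_right, hφ, norm_inv,
      Real.norm_of_nonneg hr.le, inv_mul_eq_div]
  have hsep : ∀ p ∈ X ∩ closedBall y (11 * r), ∀ p' ∈ X ∩ closedBall y (11 * r), p ≠ p' →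
      1 / 2 ≤ dist (r⁻¹ • φ (p - q)) (r⁻¹ • φ (p' - q)) := fun p hp p' hp' hne => by
    rw [hdist, le_div_iff₀ hr, one_div_mul_eq_div]
    exact h.half_le_norm_apply_sub hqX hp.1 hp'.1 hne (by linarith [hq22 hp])
      (by linarith [hq22 hp'])
  have hinj : InjOn (fun p => r⁻¹ • φ (p - q)) (X ∩ closedBall y (11 * r)) :=
    fun p hp p' hp' heq => by
      by_contra hne
      have hpp := hsep p hp p' hp' hne
      rw [dist_eq_zero.2 heq] at hpp
      norm_num at hpp
  rw [← hinj.encard_image]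
  refine encard_le_packingConst (image_subset_iff.2 fun p hp => ?_) ?_
  · have hp0 := hdist p q
    rw [sub_self, map_zero, smul_zero] at hp0
    rw [mem_preimage, mem_closedBall, hp0, div_le_iff₀ hr]
    exact ((h.isDProj q hqX).norm_apply_le _).trans (by simpa only [dist_eq_norm] using hq22 hp)
  · rintro _ ⟨p, hp, rfl⟩ _ ⟨p', hp', rfl⟩ hne
    exact hsep p hp p' hp' fun heq => hne (by rw [heq])

theorem exists_finset (h : IsFlatNet d X Q r δ) (y : H) :
    ∃ T : Finset H, (∀ q, q ∈ T ↔ q ∈ X ∧ dist q y ≤ 11 * r) ∧ T.card ≤ packingConst d := by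
  have hcard := h.encard_inter_closedBall_le y
  have hfin := finite_of_encard_le_coe hcard
  rw [hfin.encard_eq_coe_toFinset_card, Nat.cast_le] at hcard
  exact ⟨hfin.toFinset, fun q => hfin.mem_toFinset, hcard⟩

end IsFlatNet

end FlatNets

/-! ### Averaging projections -/

section PartitionOfUnity

variable {E : Type*} [PseudoMetricSpace E]

/-- A bump function equal to `1` on the ball of radius `9 * r` about `q` and supported in the
ball of radius `10 * r`. -/
noncomputable def ballBump (r : ℝ) (q y : E) : ℝ := max (min (10 - dist y q / r) 1) 0

/-- The weight of `q` in a partition of unity near `X`, subordinate to the balls of radius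
`10 * r` about the points of `X`. Dividing by `max _ 1` rather than by the sum of all bumps keeps
the weights Lipschitz on the whole space; they still add up to `1` close to `X`. -/
noncomputable def ballWeight (X : Set E) (r : ℝ) (q y : E) : ℝ :=
  ballBump r q y / max (∑ᶠ p ∈ X, ballBump r p y) 1

variable {X : Set E} {r : ℝ} {p q y u v : E} {T : Finset E}

theorem ballBump_nonneg (r : ℝ) (q y : E) : 0 ≤ ballBump r q y := le_max_right _ _

theorem dist_le_of_ballBump_ne_zero (hr : 0 < r) (h : ballBump r q y ≠ 0) :
    dist y q ≤ 10 * r := by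
  by_contra! hlt
  refine h (max_eq_right ((min_le_left _ _).trans ?_))
  rw [sub_nonpos, le_div_iff₀ hr]
  exact hlt.le

theorem ballBump_eq_one (hr : 0 < r) (h : dist y q ≤ 9 * r) : ballBump r q y = 1 := by
  have hdiv : dist y q / r ≤ 9 := by rwa [div_le_iff₀ hr]
  rw [ballBump, min_eq_right (by linarith), max_eq_left zero_le_one]

theorem abs_ballBump_sub_le (hr : 0 < r) (q u v : E) :
    |ballBump r q u - ballBump r q v| ≤ dist u v / r := by
  calc |ballBump r q u - ballBump r q v|
      ≤ |min (10 - dist u q / r) 1 - min (10 - dist v q / r) 1| :=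
        abs_max_sub_max_le_abs _ _ _
    _ ≤ |10 - dist u q / r - (10 - dist v q / r)| := abs_inf_sub_inf_le_abs _ _ _
    _ = |dist v q - dist u q| / r := by
        rw [sub_sub_sub_cancel_left, ← sub_div, abs_div, abs_of_pos hr]
    _ ≤ dist u v / r := by
        gcongr
        rw [dist_comm u v]
        exact abs_dist_sub_le v u q

theorem ballWeight_nonneg (X : Set E) (r : ℝ) (q y : E) : 0 ≤ ballWeight X r q y :=
  div_nonneg (ballBump_nonneg _ _ _) (zero_le_one.trans (le_max_right _ _))

theorem dist_le_of_ballWeight_ne_zero (hr : 0 < r) (h : ballWeight X r q y ≠ 0) :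
    dist y q ≤ 10 * r :=
  dist_le_of_ballBump_ne_zero hr fun h0 => h (by rw [ballWeight, h0, zero_div])

theorem finsum_mem_eq_sum_of_dist_le {M : Type*} [AddCommMonoid M]
    (hT : ∀ q, q ∈ T ↔ q ∈ X ∧ dist q y ≤ 11 * r) (hu : dist u y ≤ r) (g : E → M)
    (hg : ∀ q, g q ≠ 0 → dist u q ≤ 10 * r) : ∑ᶠ q ∈ X, g q = ∑ q ∈ T, g q := by
  refine finsum_mem_eq_sum_of_inter_support_eq g (ext fun q => ?_)
  rw [mem_inter_iff, mem_inter_iff, Finset.mem_coe, hT]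
  refine ⟨fun ⟨hq, hgq⟩ => ⟨⟨hq, ?_⟩, hgq⟩, fun ⟨⟨hq, _⟩, hgq⟩ => ⟨hq, hgq⟩⟩
  linarith [dist_triangle_left q y u, hg q hgq]

theorem finsum_ballBump (hr : 0 < r) (hT : ∀ q, q ∈ T ↔ q ∈ X ∧ dist q y ≤ 11 * r)
    (hu : dist u y ≤ r) : ∑ᶠ q ∈ X, ballBump r q u = ∑ q ∈ T, ballBump r q u :=
  finsum_mem_eq_sum_of_dist_le hT hu _ fun _ => dist_le_of_ballBump_ne_zero hr

theorem sum_ballWeight (hr : 0 < r) (hT : ∀ q, q ∈ T ↔ q ∈ X ∧ dist q y ≤ 11 * r)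
    (hu : dist u y ≤ r) :
    ∑ q ∈ T, ballWeight X r q u =
      (∑ q ∈ T, ballBump r q u) / max (∑ q ∈ T, ballBump r q u) 1 := by
  simp only [ballWeight]
  rw [← Finset.sum_div, finsum_ballBump hr hT hu]

theorem sum_ballWeight_le_one (hr : 0 < r) (hT : ∀ q, q ∈ T ↔ q ∈ X ∧ dist q y ≤ 11 * r)
    (hu : dist u y ≤ r) : ∑ q ∈ T, ballWeight X r q u ≤ 1 := by
  rw [sum_ballWeight hr hT hu, div_le_one (lt_max_of_lt_right one_pos)]
  exact le_max_left _ _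

theorem sum_ballWeight_eq_one (hr : 0 < r) (hT : ∀ q, q ∈ T ↔ q ∈ X ∧ dist q y ≤ 11 * r)
    (hu : dist u y ≤ r) (hp : p ∈ X) (hup : dist u p ≤ 9 * r) :
    ∑ q ∈ T, ballWeight X r q u = 1 := by
  have hpT : p ∈ T := (hT p).2 ⟨hp, by linarith [dist_triangle_left p y u]⟩
  have h1 : 1 ≤ ∑ q ∈ T, ballBump r q u := by
    rw [← ballBump_eq_one hr hup]
    exact Finset.single_le_sum (f := (ballBump r · u)) (fun q _ => ballBump_nonneg r q u) hpT
  rw [sum_ballWeight hr hT hu, max_eq_left h1, div_self (by linarith)]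

theorem abs_div_sub_div_le {s t m n : ℝ} (hm : 1 ≤ m) (hn : 0 < n) (ht : 0 ≤ t) :
    |s / m - t / n| ≤ |s - t| + t / n * |m - n| := by
  have hm0 : 0 < m := by linarith
  have hsplit : s / m - t / n = ((s - t) - t / n * (m - n)) / m := by field_simp; ring
  rw [hsplit, abs_div, abs_of_pos hm0]
  refine (div_le_self (abs_nonneg _) hm).trans ((abs_sub _ _).trans_eq ?_)
  rw [abs_mul, abs_of_nonneg (div_nonneg ht hn.le)]

theorem sum_abs_ballWeight_sub_le {N : ℕ} (hr : 0 < r)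
    (hT : ∀ q, q ∈ T ↔ q ∈ X ∧ dist q y ≤ 11 * r) (hN : T.card ≤ N)
    (hu : dist u y ≤ r) (hv : dist v y ≤ r) :
    ∑ q ∈ T, |ballWeight X r q u - ballWeight X r q v| ≤ 2 * N * (dist u v / r) := by
  have hbump : ∑ q ∈ T, |ballBump r q u - ballBump r q v| ≤ N * (dist u v / r) := by
    refine (Finset.sum_le_card_nsmul _ _ _ fun q _ => abs_ballBump_sub_le hr q u v).trans ?_
    rw [nsmul_eq_mul]
    gcongr
  simp only [ballWeight]
  rw [finsum_ballBump hr hT hu, finsum_ballBump hr hT hv]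
  set s := ∑ q ∈ T, ballBump r q u with hs
  set t := ∑ q ∈ T, ballBump r q v with ht
  have hst : |max s 1 - max t 1| ≤ N * (dist u v / r) := by
    refine ((abs_max_sub_max_le_abs s t 1).trans ?_).trans hbump
    rw [hs, ht, ← Finset.sum_sub_distrib]
    exact Finset.abs_sum_le_sum_abs _ _
  have ht1 : t / max t 1 ≤ 1 := div_le_one_of_le₀ (le_max_left _ _) (by positivity)
  calc ∑ q ∈ T, |ballBump r q u / max s 1 - ballBump r q v / max t 1|
      ≤ ∑ q ∈ T, (|ballBump r q u - ballBump r q v| +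
          ballBump r q v / max t 1 * |max s 1 - max t 1|) :=
        Finset.sum_le_sum fun q _ =>
          abs_div_sub_div_le (le_max_right _ _) (by positivity) (ballBump_nonneg r q v)
    _ = ∑ q ∈ T, |ballBump r q u - ballBump r q v| + t / max t 1 * |max s 1 - max t 1| := by
        rw [Finset.sum_add_distrib, ← Finset.sum_mul, ← Finset.sum_div]
    _ ≤ N * (dist u v / r) + 1 * (N * (dist u v / r)) := by gcongr
    _ = 2 * N * (dist u v / r) := by ring

end PartitionOfUnity

section NetMap

variable {H : Type*} [NormedAddCommGroup H] [InnerProductSpace ℝ H]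

/-- The projection of `u` onto the plane through `p` in the direction of the range of `Q`. -/
def planeProj (Q : H →L[ℝ] H) (p u : H) : H := p + Q (u - p)

/-- The weighted average, near the points `q` of `X`, of the projections onto the planes through
`q` in the direction of the range of `Q q`; the identity away from `X`. -/
noncomputable def netMap (X : Set H) (Q : H → H →L[ℝ] H) (r : ℝ) (y : H) : H :=
  y - ∑ᶠ q ∈ X, ballWeight X r q y • (y - planeProj (Q q) q y)

theorem sub_planeProj (Q : H →L[ℝ] H) (p u : H) : u - planeProj Q p u = (u - p) - Q (u - p) :=
  (sub_sub _ _ _).symm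

theorem planeProj_sub (Q : H →L[ℝ] H) (p u v : H) :
    planeProj Q p u - planeProj Q p v = Q (u - v) := by
  simp only [planeProj, map_sub]; abel

variable {X : Set H} {Q : H → H →L[ℝ] H} {r α β : ℝ} {T : Finset H} {y u v : H}

theorem netMap_eq (hr : 0 < r) (hT : ∀ q, q ∈ T ↔ q ∈ X ∧ dist q y ≤ 11 * r)
    (hu : dist u y ≤ r) :
    netMap X Q r u = u - ∑ q ∈ T, ballWeight X r q u • (u - planeProj (Q q) q u) := by
  rw [netMap, finsum_mem_eq_sum_of_dist_le hT hu]
  exact fun q hq => dist_le_of_ballWeight_ne_zero hr fun h0 => hq (by rw [h0, zero_smul])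

theorem norm_sum_ballWeight_smul_le (hr : 0 < r)
    (hT : ∀ q, q ∈ T ↔ q ∈ X ∧ dist q y ≤ 11 * r) (hu : dist u y ≤ r) {g : H → H}
    (hβ : 0 ≤ β) (hg : ∀ q ∈ T, ‖g q‖ ≤ β) : ‖∑ q ∈ T, ballWeight X r q u • g q‖ ≤ β := by
  calc ‖∑ q ∈ T, ballWeight X r q u • g q‖
      ≤ ∑ q ∈ T, ballWeight X r q u * β := by
        refine norm_sum_le_of_le _ fun q hq => ?_
        rw [norm_smul, Real.norm_of_nonneg (ballWeight_nonneg _ _ _ _)]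
        exact mul_le_mul_of_nonneg_left (hg q hq) (ballWeight_nonneg _ _ _ _)
    _ = (∑ q ∈ T, ballWeight X r q u) * β := (Finset.sum_mul _ _ _).symm
    _ ≤ β := mul_le_of_le_one_left hβ (sum_ballWeight_le_one hr hT hu)

theorem norm_sum_ballWeight_smul_sub_le {N : ℕ} (hr : 0 < r)
    (hT : ∀ q, q ∈ T ↔ q ∈ X ∧ dist q y ≤ 11 * r) (hN : T.card ≤ N) (hu : dist u y ≤ r)
    (hv : dist v y ≤ r) {g : H → H → H} (hβ : 0 ≤ β) (hα : 0 ≤ α)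
    (hg : ∀ q ∈ T, ‖g q u - g q v‖ ≤ α * ‖u - v‖) (hgv : ∀ q ∈ T, ‖g q v‖ ≤ β * r) :
    ‖∑ q ∈ T, ballWeight X r q u • g q u - ∑ q ∈ T, ballWeight X r q v • g q v‖ ≤
      (2 * N * β + α) * ‖u - v‖ := by
  have hsplit : ∑ q ∈ T, ballWeight X r q u • g q u - ∑ q ∈ T, ballWeight X r q v • g q v =
      ∑ q ∈ T, (ballWeight X r q u - ballWeight X r q v) • g q v +
        ∑ q ∈ T, ballWeight X r q u • (g q u - g q v) := by
    rw [← Finset.sum_sub_distrib, ← Finset.sum_add_distrib]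
    refine Finset.sum_congr rfl fun q _ => ?_
    rw [smul_sub, sub_smul]; abel
  have hweights : ‖∑ q ∈ T, (ballWeight X r q u - ballWeight X r q v) • g q v‖ ≤
      2 * N * β * ‖u - v‖ := by
    calc ‖∑ q ∈ T, (ballWeight X r q u - ballWeight X r q v) • g q v‖
        ≤ ∑ q ∈ T, |ballWeight X r q u - ballWeight X r q v| * (β * r) := by
          refine norm_sum_le_of_le _ fun q hq => ?_
          rw [norm_smul, Real.norm_eq_abs]
          exact mul_le_mul_of_nonneg_left (hgv q hq) (abs_nonneg _)
      _ = (∑ q ∈ T, |ballWeight X r q u - ballWeight X r q v|) * (β * r) :=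
          (Finset.sum_mul _ _ _).symm
      _ ≤ 2 * N * (dist u v / r) * (β * r) := by
          gcongr
          exact sum_abs_ballWeight_sub_le hr hT hN hu hv
      _ = 2 * N * β * ‖u - v‖ := by rw [dist_eq_norm]; field_simp
  rw [hsplit, add_mul]
  refine norm_add_le_of_le hweights (norm_sum_ballWeight_smul_le hr hT hu ?_ hg)
  positivity

end NetMap

/-! ### One step of the construction -/

section Stages

variable {H : Type*} [NormedAddCommGroup H] [InnerProductSpace ℝ H]

/-- The next generation `X'`, with direction projections `Q'`, after a net `X` at scale `r`: each
point of `X'` has a parent in `X`, and the planes of both generations nearly agree. -/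
structure IsNextNet (d : ℕ) (X X' : Set H) (Q Q' : H → H →L[ℝ] H) (r δ : ℝ) : Prop
    extends IsCompatible X X' Q Q' r δ where
  isDProj : ∀ q ∈ X', IsDProj d (Q' q)
  parent : ∀ q ∈ X', ∃ p ∈ X, dist q p ≤ 2 * r

/-- The set `S`, an approximation at scale `r` of the set under construction, is `b`-flat at scale
`r`. Near the net `X` it is even an `a`-flat graph over the planes through the points of the
net. -/
structure IsStage (d : ℕ) (X : Set H) (Q : H → H →L[ℝ] H) (r a b : ℝ) (S : Set H) : Prop where
  graphical : IsGraphical d S b r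
  flat_net : ∀ y ∈ S, ∀ p ∈ X, dist y p ≤ 11 * r → ‖(y - p) - Q p (y - p)‖ ≤ a * r
  graph_net : ∀ y ∈ S, ∀ p ∈ X, dist y p ≤ 11 * r → IsGraph S y (Q p) a r
  near : ∀ p ∈ X, ∃ y ∈ S, dist y p ≤ r

/-- The constants for which averaging projections over a flat net with constant `δ` preserves
the constants `a` and `b` of a stage. -/
structure IsAdmissible (d : ℕ) (δ a b : ℝ) : Prop where
  δ_nonneg : 0 ≤ δ
  δ_le : (52 * packingConst d + 160) * δ ≤ a
  a_le : (8 * packingConst d + 4) * a ≤ b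
  b_le : b ≤ 1 / 100

variable {d : ℕ} {X X' S : Set H} {Q Q' : H → H →L[ℝ] H} {r δ a b : ℝ} {y p q u v : H}

namespace IsAdmissible

theorem mul_δ_le (hc : IsAdmissible d δ a b) : 160 * δ ≤ a := by
  have hNδ : 0 ≤ packingConst d * δ := mul_nonneg (Nat.cast_nonneg _) hc.δ_nonneg
  linarith [hc.δ_le]

theorem a_nonneg (hc : IsAdmissible d δ a b) : 0 ≤ a := by
  linarith [hc.mul_δ_le, hc.δ_nonneg]

theorem mul_a_le (hc : IsAdmissible d δ a b) : (4 * packingConst d + 1) * a ≤ 1 / 200 := by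
  linarith [hc.a_le, hc.b_le, hc.a_nonneg]

theorem a_le_div (hc : IsAdmissible d δ a b) : a ≤ 1 / 200 := by
  have hNa : 0 ≤ packingConst d * a := mul_nonneg (Nat.cast_nonneg _) hc.a_nonneg
  linarith [hc.mul_a_le]

end IsAdmissible

namespace IsFlatNet

theorem δ_nonneg (hX : IsFlatNet d X Q r δ) (hp : p ∈ X) : 0 ≤ δ :=
  (norm_nonneg _).trans (hX.angle p hp p hp (by rw [dist_self]; linarith [hX.r_pos]))

theorem netMap_eq_self (hX : IsFlatNet d X Q r δ) (hy : ∀ q ∈ X, 11 * r < dist q y)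
    (hu : dist u y ≤ r) : netMap X Q r u = u := by
  have hT (q) : q ∈ (∅ : Finset H) ↔ q ∈ X ∧ dist q y ≤ 11 * r := by
    simpa only [Finset.notMem_empty, false_iff, not_and, not_le] using hy q
  rw [netMap_eq hX.r_pos hT hu, Finset.sum_empty, sub_zero]

theorem norm_apply_sub_apply_le (hX : IsFlatNet d X Q r δ) (hp : p ∈ X) (hq : q ∈ X)
    (hqp : dist q p ≤ 100 * r) (x : H) : ‖Q p x - Q q x‖ ≤ δ * ‖x‖ :=
  (Q p - Q q).le_of_opNorm_le (hX.angle p hp q hq hqp) x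

theorem norm_planeProj_sub_planeProj_le (hX : IsFlatNet d X Q r δ) (hp : p ∈ X) (hq : q ∈ X)
    (hqp : dist q p ≤ 100 * r) (hu : dist u q ≤ 12 * r) :
    ‖planeProj (Q p) p u - planeProj (Q q) q u‖ ≤ 13 * δ * r := by
  have hsplit : planeProj (Q p) p u - planeProj (Q q) q u =
      (Q p (u - q) - Q q (u - q)) - ((q - p) - Q p (q - p)) := by
    simp only [planeProj, map_sub]; abel
  rw [dist_eq_norm] at hu
  rw [hsplit]
  linarith [norm_sub_le (Q p (u - q) - Q q (u - q)) ((q - p) - Q p (q - p)),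
    hX.norm_apply_sub_apply_le hp hq hqp (u - q), hX.flat p hp q hq hqp,
    mul_le_mul_of_nonneg_left hu (hX.δ_nonneg hp)]

theorem norm_planeProj_sub_sub_le (hX : IsFlatNet d X Q r δ) (hp : p ∈ X) (hq : q ∈ X)
    (hqp : dist q p ≤ 100 * r) (u v : H) :
    ‖(planeProj (Q p) p u - planeProj (Q q) q u) -
      (planeProj (Q p) p v - planeProj (Q q) q v)‖ ≤ δ * ‖u - v‖ := by
  rw [sub_sub_sub_comm, planeProj_sub, planeProj_sub]
  exact hX.norm_apply_sub_apply_le hp hq hqp _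

theorem netMap_eq_planeProj_sub (hX : IsFlatNet d X Q r δ) (hp : p ∈ X) {T : Finset H}
    (hT : ∀ q, q ∈ T ↔ q ∈ X ∧ dist q y ≤ 11 * r) (hy : dist y p ≤ 8 * r) (hu : dist u y ≤ r) :
    netMap X Q r u = planeProj (Q p) p u -
      ∑ q ∈ T, ballWeight X r q u • (planeProj (Q p) p u - planeProj (Q q) q u) := by
  have hup : dist u p ≤ 9 * r := by linarith [dist_triangle u y p]
  rw [netMap_eq hX.r_pos hT hu]
  simp only [smul_sub, Finset.sum_sub_distrib, ← Finset.sum_smul]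
  rw [sum_ballWeight_eq_one hX.r_pos hT hu hp hup, one_smul, one_smul]
  abel

theorem norm_netMap_sub_sub_apply_le (hX : IsFlatNet d X Q r δ) (hp : p ∈ X)
    (hy : dist y p ≤ 8 * r) (hu : dist u y ≤ r) (hv : dist v y ≤ r) :
    ‖(netMap X Q r u - netMap X Q r v) - Q p (u - v)‖ ≤
      (26 * packingConst d + 1) * δ * ‖u - v‖ := by
  obtain ⟨T, hT, hcard⟩ := hX.exists_finset y
  have hδ := hX.δ_nonneg hp
  have hqp {q} (hq : q ∈ T) : dist q p ≤ 100 * r := by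
    linarith [dist_triangle q y p, ((hT q).1 hq).2, hX.r_pos]
  have hvq {q} (hq : q ∈ T) : dist v q ≤ 12 * r := by
    linarith [dist_triangle_right v q y, ((hT q).1 hq).2]
  have herr := norm_sum_ballWeight_smul_sub_le hX.r_pos hT hcard hu hv
    (g := fun q u => planeProj (Q p) p u - planeProj (Q q) q u) (β := 13 * δ) (by positivity) hδ
    (fun q hq => hX.norm_planeProj_sub_sub_le hp ((hT q).1 hq).1 (hqp hq) u v)
    fun q hq => hX.norm_planeProj_sub_planeProj_le hp ((hT q).1 hq).1 (hqp hq) (hvq hq)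
  rw [hX.netMap_eq_planeProj_sub hp hT hy hu, hX.netMap_eq_planeProj_sub hp hT hy hv,
    sub_sub_sub_comm, planeProj_sub, sub_sub_cancel_left, norm_neg]
  exact herr.trans_eq (by ring)

theorem norm_netMap_sub_sub_apply_self_le (hX : IsFlatNet d X Q r δ) (hp : p ∈ X)
    (hu : dist u p ≤ 8 * r) :
    ‖(netMap X Q r u - p) - Q p (netMap X Q r u - p)‖ ≤ 13 * δ * r := by
  obtain ⟨T, hT, -⟩ := hX.exists_finset u
  have hr := hX.r_pos
  have hδ := hX.δ_nonneg hp
  have huu : dist u u ≤ r := by rw [dist_self]; exact hr.le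
  have hqp {q} (hq : q ∈ T) : dist q p ≤ 100 * r := by
    linarith [dist_triangle q u p, ((hT q).1 hq).2]
  have huq {q} (hq : q ∈ T) : dist u q ≤ 12 * r := by
    linarith [dist_comm u q, ((hT q).1 hq).2]
  set s := ∑ q ∈ T, ballWeight X r q u • (planeProj (Q p) p u - planeProj (Q q) q u)
  have hs_le : ‖s‖ ≤ 13 * δ * r := norm_sum_ballWeight_smul_le hr hT huu (by positivity)
    fun q hq => hX.norm_planeProj_sub_planeProj_le hp ((hT q).1 hq).1 (hqp hq) (huq hq)
  have hsub : netMap X Q r u - p = Q p (u - p) - s := by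
    rw [hX.netMap_eq_planeProj_sub hp hT hu huu, planeProj]; abel
  rw [hsub, map_sub (Q p) (Q p (u - p)) s, (hX.isDProj p hp).apply_apply, sub_sub_sub_cancel_left,
    norm_sub_rev]
  exact ((hX.isDProj p hp).norm_sub_apply_le s).trans hs_le

end IsFlatNet

namespace IsStage

theorem dist_netMap_le (h : IsStage d X Q r a b S) (hX : IsFlatNet d X Q r δ) (ha : 0 ≤ a)
    (hu : u ∈ S) : dist (netMap X Q r u) u ≤ a * r := by
  obtain ⟨T, hT, -⟩ := hX.exists_finset u
  have hr := hX.r_pos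
  have huu : dist u u ≤ r := by rw [dist_self]; exact hr.le
  rw [dist_eq_norm, netMap_eq hr hT huu, sub_sub_cancel_left, norm_neg]
  refine norm_sum_ballWeight_smul_le hr hT huu (by positivity) fun q hq => ?_
  rw [sub_planeProj]
  exact h.flat_net u hu q ((hT q).1 hq).1 (by linarith [dist_comm u q, ((hT q).1 hq).2])

theorem norm_netMap_sub_sub_le (h : IsStage d X Q r a b S) (hX : IsFlatNet d X Q r δ)
    (ha : 0 ≤ a) (hy : y ∈ S) (hu : u ∈ S) (hv : v ∈ S) (huy : dist u y ≤ r)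
    (hvy : dist v y ≤ r) :
    ‖(netMap X Q r u - netMap X Q r v) - (u - v)‖ ≤
      (4 * packingConst d + 1) * a * ‖u - v‖ := by
  obtain ⟨T, hT, hcard⟩ := hX.exists_finset y
  have hr := hX.r_pos
  have hyq {q} (hq : q ∈ T) : dist y q ≤ 11 * r := by linarith [dist_comm y q, ((hT q).1 hq).2]
  have hsub {q} (hq : q ∈ T) {u v} (hu : u ∈ S) (hv : v ∈ S) (huy : dist u y ≤ r)
      (hvy : dist v y ≤ r) :
      ‖(u - planeProj (Q q) q u) - (v - planeProj (Q q) q v)‖ ≤ a * ‖u - v‖ := by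
    rw [sub_sub_sub_comm, planeProj_sub]
    exact (h.graph_net y hy q ((hT q).1 hq).1 (hyq hq)).cone u hu v hv (by linarith)
      (by linarith)
  have hself {q} (hq : q ∈ T) : ‖v - planeProj (Q q) q v‖ ≤ 2 * a * r := by
    have hyQ := h.flat_net y hy q ((hT q).1 hq).1 (hyq hq)
    rw [← sub_planeProj] at hyQ
    have hvy' := mul_le_mul_of_nonneg_left hvy ha
    rw [dist_eq_norm] at hvy'
    linarith [norm_le_norm_add_norm_sub' (v - planeProj (Q q) q v) (y - planeProj (Q q) q y),
      hsub hq hv hy hvy (by rw [dist_self]; exact hr.le)]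
  have hsum := norm_sum_ballWeight_smul_sub_le hr hT hcard huy hvy
    (g := fun q u => u - planeProj (Q q) q u) (β := 2 * a) (by positivity) ha
    (fun q hq => hsub hq hu hv huy hvy) fun q hq => hself hq
  rw [netMap_eq hr hT huy, netMap_eq hr hT hvy, sub_sub_sub_comm, sub_sub_cancel_left,
    sub_sub_cancel_left, neg_sub_neg, norm_sub_rev]
  exact hsum.trans_eq (by ring)

section Next

variable (h : IsStage d X Q r a b S) (hX : IsFlatNet d X Q r δ) (hc : IsAdmissible d δ a b)
include h hX hc

theorem norm_netMap_sub_sub_le_div (hy : y ∈ S) (hu : u ∈ S) (hv : v ∈ S) (huy : dist u y ≤ r)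
    (hvy : dist v y ≤ r) :
    ‖(netMap X Q r u - netMap X Q r v) - (u - v)‖ ≤ 1 / 100 * ‖u - v‖ := by
  refine (h.norm_netMap_sub_sub_le hX hc.a_nonneg hy hu hv huy hvy).trans ?_
  gcongr
  linarith [hc.mul_a_le]

theorem norm_sub_le_two_mul (hy : y ∈ S) (hu : u ∈ S) (hv : v ∈ S) (huy : dist u y ≤ r)
    (hvy : dist v y ≤ r) : ‖u - v‖ ≤ 2 * ‖netMap X Q r u - netMap X Q r v‖ := by
  linarith [norm_le_norm_add_norm_sub (netMap X Q r u - netMap X Q r v) (u - v),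
    h.norm_netMap_sub_sub_le_div hX hc hy hu hv huy hvy, norm_nonneg (u - v)]

theorem dist_netMap_le_div (hu : u ∈ S) : dist (netMap X Q r u) u ≤ 1 / 10 * r := by
  refine (h.dist_netMap_le hX hc.a_nonneg hu).trans ?_
  have hr := hX.r_pos
  gcongr
  linarith [hc.a_le_div]

theorem isGraph_image {R R' : H →L[ℝ] H} {s s' : ℝ} (hg : IsGraph S y R s r)
    (hs : s ≤ 1 / 100) (hR : IsDProj d R) (hR' : IsDProj d R') (hRR : ‖R' - R‖ ≤ 1 / 100)
    (hy : y ∈ S)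
    (hcone : ∀ u ∈ S, ∀ v ∈ S, dist u y ≤ r → dist v y ≤ r →
      ‖(netMap X Q r u - netMap X Q r v) - R' (netMap X Q r u - netMap X Q r v)‖ ≤
        s' * ‖netMap X Q r u - netMap X Q r v‖) :
    IsGraph (netMap X Q r '' S) (netMap X Q r y) R' s' (r / 10) :=
  hg.image hR hR' hRR hy hX.r_pos hs
    (fun _ hu _ hv huy hvy => h.norm_netMap_sub_sub_le_div hX hc hy hu hv huy hvy)
    (fun _ hu => h.dist_netMap_le_div hX hc hu) hcone

theorem isGraph_image_of_near (hy : y ∈ S) (hp : p ∈ X) (hyp : dist y p ≤ 11 * r) :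
    IsGraph (netMap X Q r '' S) (netMap X Q r y) (Q p) b (r / 10) := by
  have hg := h.graph_net y hy p hp hyp
  have hQp := hX.isDProj p hp
  have ha := hc.a_nonneg
  refine h.isGraph_image hX hc hg (by linarith [hc.a_le_div]) hQp hQp
    (by rw [sub_self, norm_zero]; norm_num) hy fun u hu v hv huy hvy => ?_
  have hcone := hg.cone u hu v hv (by linarith [hX.r_pos]) (by linarith [hX.r_pos])
  have hσ := (hQp.norm_sub_apply_le _).trans
    (h.norm_netMap_sub_sub_le hX ha hy hu hv huy hvy)
  set w := netMap X Q r u - netMap X Q r v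
  have hsplit : w - Q p w = ((u - v) - Q p (u - v)) + ((w - (u - v)) - Q p (w - (u - v))) := by
    rw [map_sub (Q p) w (u - v)]; abel
  calc ‖w - Q p w‖
      ≤ a * ‖u - v‖ + (4 * packingConst d + 1) * a * ‖u - v‖ := by
        rw [hsplit]; exact norm_add_le_of_le hcone hσ
    _ = (4 * packingConst d + 2) * a * ‖u - v‖ := by ring
    _ ≤ (4 * packingConst d + 2) * a * (2 * ‖w‖) := by
        gcongr
        exact h.norm_sub_le_two_mul hX hc hy hu hv huy hvy
    _ = (8 * packingConst d + 4) * a * ‖w‖ := by ring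
    _ ≤ b * ‖w‖ := by gcongr; exact hc.a_le

theorem isGraphical_image : IsGraphical d (netMap X Q r '' S) b (r / 10) := by
  rintro _ ⟨y, hy, rfl⟩
  by_cases hyX : ∃ p ∈ X, dist p y ≤ 11 * r
  · obtain ⟨p, hp, hpy⟩ := hyX
    rw [dist_comm] at hpy
    exact ⟨Q p, hX.isDProj p hp, h.isGraph_image_of_near hX hc hy hp hpy⟩
  · push Not at hyX
    obtain ⟨R, hR, hg⟩ := h.graphical y hy
    refine ⟨R, hR, h.isGraph_image hX hc hg hc.b_le hR hR
      (by rw [sub_self, norm_zero]; norm_num) hy fun u hu v hv huy hvy => ?_⟩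
    rw [hX.netMap_eq_self hyX huy, hX.netMap_eq_self hyX hvy]
    exact hg.cone u hu v hv (by linarith [hX.r_pos]) (by linarith [hX.r_pos])

variable (hn : IsNextNet d X X' Q Q' r δ)
include hn

theorem exists_parent (hy : y ∈ S) (hq : q ∈ X')
    (hyq : dist (netMap X Q r y) q ≤ 11 * (r / 10)) :
    ∃ p ∈ X, dist q p ≤ 2 * r ∧ dist y p ≤ 8 * r := by
  obtain ⟨p, hp, hqp⟩ := hn.parent q hq
  refine ⟨p, hp, hqp, ?_⟩
  linarith [dist_triangle4 y (netMap X Q r y) q p, dist_comm y (netMap X Q r y),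
    h.dist_netMap_le_div hX hc hy, hX.r_pos]

theorem flat_net_image (hy : y ∈ S) (hq : q ∈ X')
    (hyq : dist (netMap X Q r y) q ≤ 11 * (r / 10)) :
    ‖(netMap X Q r y - q) - Q' q (netMap X Q r y - q)‖ ≤ a * (r / 10) := by
  obtain ⟨p, hp, hqp, hyp⟩ := h.exists_parent hX hc hn hy hq hyq
  have hr := hX.r_pos
  have hqp' : dist q p ≤ 100 * r := by linarith
  have hσp := hX.norm_netMap_sub_sub_apply_self_le hp hyp
  set z := netMap X Q r y
  have hangle := (Q p - Q' q).le_of_opNorm_le (hn.angle p hp q hq hqp') (z - q)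
  have hsplit : (z - q) - Q' q (z - q) =
      (Q p - Q' q) (z - q) + ((z - p) - Q p (z - p)) - ((q - p) - Q p (q - p)) := by
    simp only [sub_apply, map_sub]; abel
  rw [dist_eq_norm] at hyq
  calc ‖(z - q) - Q' q (z - q)‖
      ≤ δ * (11 * (r / 10)) + 13 * δ * r + δ * r := by
        rw [hsplit]
        refine norm_sub_le_of_le (norm_add_le_of_le (hangle.trans ?_) hσp)
          (hn.flat p hp q hq hqp')
        exact mul_le_mul_of_nonneg_left hyq hc.δ_nonneg
    _ = 151 * δ * (r / 10) := by ring
    _ ≤ a * (r / 10) := by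
        gcongr
        linarith [hc.mul_δ_le, hc.δ_nonneg]

theorem graph_net_image (hy : y ∈ S) (hq : q ∈ X')
    (hyq : dist (netMap X Q r y) q ≤ 11 * (r / 10)) :
    IsGraph (netMap X Q r '' S) (netMap X Q r y) (Q' q) a (r / 10) := by
  obtain ⟨p, hp, hqp, hyp⟩ := h.exists_parent hX hc hn hy hq hyq
  have hr := hX.r_pos
  have hδ := hc.δ_nonneg
  have hangle := hn.angle p hp q hq (by linarith)
  have hQp := hX.isDProj p hp
  refine h.isGraph_image hX hc (h.graph_net y hy p hp (by linarith))
    (by linarith [hc.a_le_div]) hQp (hn.isDProj q hq)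
    (by rw [norm_sub_rev]; linarith [hc.mul_δ_le, hc.a_le_div]) hy fun u hu v hv huy hvy => ?_
  have hσ := ((hn.isDProj q hq).norm_sub_apply_le _).trans
    (hX.norm_netMap_sub_sub_apply_le hp hyp huy hvy)
  have hQQ : ‖(Q p - Q' q) (Q p (u - v))‖ ≤ δ * ‖u - v‖ :=
    ((Q p - Q' q).le_of_opNorm_le hangle _).trans
      (mul_le_mul_of_nonneg_left (hQp.norm_apply_le _) hδ)
  set w := netMap X Q r u - netMap X Q r v
  have hsplit : w - Q' q w = ((w - Q p (u - v)) - Q' q (w - Q p (u - v))) +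
      (Q p - Q' q) (Q p (u - v)) := by
    rw [sub_apply, hQp.apply_apply, map_sub (Q' q) w (Q p (u - v))]; abel
  calc ‖w - Q' q w‖
      ≤ (26 * packingConst d + 1) * δ * ‖u - v‖ + δ * ‖u - v‖ := by
        rw [hsplit]; exact norm_add_le_of_le hσ hQQ
    _ = (26 * packingConst d + 2) * δ * ‖u - v‖ := by ring
    _ ≤ (26 * packingConst d + 2) * δ * (2 * ‖w‖) := by
        gcongr
        exact h.norm_sub_le_two_mul hX hc hy hu hv huy hvy
    _ = (52 * packingConst d + 4) * δ * ‖w‖ := by ring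
    _ ≤ a * ‖w‖ := by
        gcongr
        linarith [hc.δ_le]

theorem near_image (hq : q ∈ X') : ∃ y ∈ netMap X Q r '' S, dist y q ≤ r / 10 := by
  obtain ⟨p, hp, hqp⟩ := hn.parent q hq
  obtain ⟨y, hy, hyp⟩ := h.near p hp
  have hr := hX.r_pos
  have hQp := hX.isDProj p hp
  have hyp' : dist y p ≤ 11 * r := by linarith
  have hg := h.graph_net y hy p hp hyp'
  have hqy : ‖Q p (q - y)‖ ≤ 3 * r := by
    refine (hQp.norm_apply_le _).trans ?_
    rw [← dist_eq_norm]
    linarith [dist_triangle_right q y p]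
  obtain ⟨u, hu, huy, hQu⟩ := hg.full (Q p (q - y)) (hQp.apply_apply _) hqy
  refine ⟨netMap X Q r u, mem_image_of_mem _ hu, ?_⟩
  have hcone := hg.cone u hu y hy huy (by rw [dist_self]; positivity)
  have har := mul_le_mul_of_nonneg_right hc.a_le_div hr.le
  have hδr := mul_le_mul_of_nonneg_right hc.mul_δ_le hr.le
  have hauy := mul_le_mul_of_nonneg_left huy hc.a_nonneg
  have hsplit : u - q = ((u - y) - Q p (u - y)) + ((y - p) - Q p (y - p)) -
      ((q - p) - Q p (q - p)) := by
    rw [hQu]; simp only [map_sub]; abel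
  have huq : ‖u - q‖ ≤ a * ‖u - y‖ + a * r + δ * r := by
    rw [hsplit]
    exact norm_sub_le_of_le (norm_add_le_of_le hcone (h.flat_net y hy p hp hyp'))
      (hn.flat p hp q hq (by linarith))
  rw [← dist_eq_norm, ← dist_eq_norm] at huq
  linarith [dist_triangle (netMap X Q r u) u q, h.dist_netMap_le hX hc.a_nonneg hu]

theorem next : IsStage d X' Q' (r / 10) a b (netMap X Q r '' S) where
  graphical := h.isGraphical_image hX hc
  flat_net := by
    rintro _ ⟨y, hy, rfl⟩ q hq hyq
    exact h.flat_net_image hX hc hn hy hq hyq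
  graph_net := by
    rintro _ ⟨y, hy, rfl⟩ q hq hyq
    exact h.graph_net_image hX hc hn hy hq hyq
  near _ hq := h.near_image hX hc hn hq

end Next

end IsStage

end Stages

/-! ### Limits of successive perturbations -/

section Approximation

theorem radK_pos (k : ℕ) : 0 < radK k := by unfold radK; positivity

theorem radK_zero : radK 0 = 1 := pow_zero _

theorem radK_succ (k : ℕ) : radK (k + 1) = radK k / 10 := by
  rw [radK, radK, pow_succ, div_eq_mul_inv]

theorem exists_radK_lt_le {t : ℝ} (ht : 0 < t) (ht1 : t ≤ 1) :
    ∃ k, radK (k + 1) < t ∧ t ≤ radK k :=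
  exists_nat_pow_near_of_lt_one ht ht1 (by norm_num) (by norm_num)

theorem exists_le_radK_lt {e : ℝ} (he : 0 < e) (K : ℕ) : ∃ k, K ≤ k ∧ radK k < e := by
  obtain ⟨n, hn⟩ := exists_pow_lt_of_lt_one he (by norm_num : (10 : ℝ)⁻¹ < 1)
  exact ⟨max K n, le_max_left _ _,
    (pow_le_pow_of_le_one (by norm_num) (by norm_num) (le_max_right _ _)).trans_lt hn⟩

theorem sqrt_le_pow {t s c : ℝ} {k : ℕ} (hs : 0 ≤ s) (hc : 0 ≤ c) (hsc : s ≤ c ^ 2)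
    (ht : t ≤ s ^ k) : √t ≤ c ^ k := by
  refine Real.sqrt_le_iff.2 ⟨pow_nonneg hc k, ht.trans ?_⟩
  rw [← pow_mul, mul_comm, pow_mul]
  exact pow_le_pow_left₀ hs hsc k

variable {E : Type*} [MetricSpace E]

/-- Maps `F k`, starting from the identity, such that `F (k + 1)` differs on `S` from `F k` by at
most `b * 10⁻ᵏ`, and distorts distances at scale `10⁻ᵏ` by a factor close to `1`. -/
structure IsApprox (S : Set E) (F : ℕ → E → E) (b : ℝ) : Prop where
  b_nonneg : 0 ≤ b
  b_le : b ≤ 1 / 100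
  zero : ∀ x, F 0 x = x
  dist_succ_le : ∀ k, ∀ x ∈ S, dist (F (k + 1) x) (F k x) ≤ b * radK k
  abs_dist_sub_le : ∀ k, ∀ x ∈ S, ∀ y ∈ S, dist (F k x) (F k y) ≤ radK k →
    |dist (F (k + 1) x) (F (k + 1) y) - dist (F k x) (F k y)| ≤ b * dist (F k x) (F k y)

/-- The map `f` is the limit on `S` of the maps `F k`, with the rate of convergence which
summing a geometric series gives. -/
structure IsApproxLimit (S : Set E) (F : ℕ → E → E) (b : ℝ) (f : E → E) : Prop
    extends IsApprox S F b where
  dist_le : ∀ x ∈ S, ∀ k, dist (F k x) (f x) ≤ 10 / 9 * b * radK k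

variable {S : Set E} {F : ℕ → E → E} {f : E → E} {b : ℝ} {x y : E}

namespace IsApprox

theorem exists_isApproxLimit [CompleteSpace E] (h : IsApprox S F b) :
    ∃ f, IsApproxLimit S F b f := by
  have hlim : ∀ x ∈ S, ∃ z, ∀ k, dist (F k x) z ≤ 10 / 9 * b * radK k := fun x hx => by
    have hstep (n) : dist (F n x) (F (n + 1) x) ≤ b * (10 : ℝ)⁻¹ ^ n := by
      rw [dist_comm]; exact h.dist_succ_le n x hx
    obtain ⟨z, hz⟩ := cauchySeq_tendsto_of_complete
      (cauchySeq_of_le_geometric _ b (by norm_num) hstep)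
    refine ⟨z, fun k => (dist_le_of_le_geometric_of_tendsto _ b (by norm_num) hstep hz k).trans_eq
      ?_⟩
    rw [radK]; ring
  choose! f hf using hlim
  exact ⟨f, h, hf⟩

theorem abs_dist_succ_sub_le (h : IsApprox S F b) (hx : x ∈ S) (hy : y ∈ S) (k : ℕ) :
    |dist (F (k + 1) x) (F (k + 1) y) - dist (F k x) (F k y)| ≤ 0.02 * dist (F k x) (F k y) := by
  have hb := h.b_le
  rcases le_total (dist (F k x) (F k y)) (radK k) with hle | hle
  · refine (h.abs_dist_sub_le k x hx y hy hle).trans ?_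
    gcongr
    linarith
  · refine (dist_dist_dist_le _ _ _ _).trans ?_
    linarith [h.dist_succ_le k x hx, h.dist_succ_le k y hy,
      mul_le_mul hb hle (radK_pos k).le (by norm_num)]

theorem dist_add_le (h : IsApprox S F b) (hx : x ∈ S) (hy : y ∈ S) (k m : ℕ) :
    dist (F (k + m) x) (F (k + m) y) ≤ 1.02 ^ m * dist (F k x) (F k y) := by
  induction m with
  | zero => rw [add_zero, pow_zero, one_mul]
  | succ m ih =>
    rw [pow_succ, ← add_assoc]
    linarith [(abs_le.1 (h.abs_dist_succ_sub_le hx hy (k + m))).2]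

theorem dist_le_pow_mul (h : IsApprox S F b) (hx : x ∈ S) (hy : y ∈ S) (k : ℕ) :
    dist (F k x) (F k y) ≤ 1.02 ^ k * dist x y := by
  simpa only [zero_add, h.zero] using h.dist_add_le hx hy 0 k

theorem pow_mul_le_dist (h : IsApprox S F b) (hx : x ∈ S) (hy : y ∈ S) (m : ℕ) :
    0.98 ^ m * dist x y ≤ dist (F m x) (F m y) := by
  induction m with
  | zero => rw [pow_zero, one_mul, h.zero, h.zero]
  | succ m ih =>
    rw [pow_succ]
    linarith [(abs_le.1 (h.abs_dist_succ_sub_le hx hy m)).1]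

theorem exists_radK_le_dist (h : IsApprox S F b) (hx : x ∈ S) (hy : y ∈ S) (hxy : x ≠ y) :
    ∃ n, radK n ≤ dist (F n x) (F n y) := by
  by_contra! hlt
  obtain ⟨n, hn⟩ := exists_pow_lt_of_lt_one (dist_pos.2 hxy)
    (by norm_num : (0.98⁻¹ * 10⁻¹ : ℝ) < 1)
  rw [mul_pow, inv_pow 0.98, inv_mul_lt_iff₀ (by positivity)] at hn
  exact lt_asymm hn ((h.pow_mul_le_dist hx hy n).trans_lt (hlt n))

-- `n` is the first scale at which the images of `x` and `y` are separated.
theorem exists_radK_le_dist_and_sqrt_le (h : IsApprox S F b) (hx : x ∈ S) (hy : y ∈ S)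
    (hne : x ≠ y) (hxy : dist x y ≤ 1) :
    ∃ n, radK n ≤ dist (F n x) (F n y) ∧ √(dist x y) ≤ 2 * 0.98 ^ n := by
  have hex := h.exists_radK_le_dist hx hy hne
  refine ⟨Nat.find hex, Nat.find_spec hex, ?_⟩
  rcases hn : Nat.find hex with _ | m
  · rw [pow_zero]; linarith [Real.sqrt_le_one.2 hxy]
  have hm : dist (F m x) (F m y) < (10 : ℝ)⁻¹ ^ m :=
    not_le.1 (Nat.find_min hex (by omega : m < Nat.find hex))
  have hxy' : dist x y ≤ (0.98⁻¹ * 10⁻¹) ^ m := by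
    rw [mul_pow, inv_pow 0.98, le_inv_mul_iff₀ (by positivity)]
    exact (h.pow_mul_le_dist hx hy m).trans hm.le
  have hsqrt : √(dist x y) ≤ 0.98 ^ m :=
    sqrt_le_pow (by norm_num) (by norm_num) (by norm_num) hxy'
  have hpow : (0 : ℝ) < 0.98 ^ m := by positivity
  rw [pow_succ]
  linarith

end IsApprox

namespace IsApproxLimit

theorem abs_dist_limit_sub_le (h : IsApproxLimit S F b f) (hx : x ∈ S) (hy : y ∈ S) (k : ℕ) :
    |dist (f x) (f y) - dist (F k x) (F k y)| ≤ 0.03 * radK k := by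
  refine (dist_dist_dist_le _ _ _ _).trans ?_
  have hb := mul_le_mul_of_nonneg_right h.b_le (radK_pos k).le
  linarith [h.dist_le x hx k, h.dist_le y hy k, radK_pos k, dist_comm (f x) (F k x),
    dist_comm (f y) (F k y)]

theorem mul_dist_le_dist_limit (h : IsApproxLimit S F b f) (hx : x ∈ S) (hy : y ∈ S) {k : ℕ}
    (hk : radK k ≤ dist (F k x) (F k y)) : 0.97 * dist (F k x) (F k y) ≤ dist (f x) (f y) := by
  linarith [(abs_le.1 (h.abs_dist_limit_sub_le hx hy k)).1]

theorem dist_limit_le_sqrt (h : IsApproxLimit S F b f) (hx : x ∈ S) (hy : y ∈ S)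
    (hxy : dist x y ≤ 1) : dist (f x) (f y) ≤ 10 * √(dist x y) := by
  rcases eq_or_ne x y with rfl | hne
  · rw [dist_self]; positivity
  obtain ⟨k, hk, hk'⟩ := exists_radK_lt_le (dist_pos.2 hne) hxy
  rw [radK_succ] at hk
  set t := dist x y
  have hpow : 1.02 ^ k * √t ≤ 1 := by
    rw [← le_inv_mul_iff₀ (by positivity), mul_one, ← inv_pow]
    exact sqrt_le_pow (by norm_num) (by norm_num) (by norm_num) hk'
  have hmul : 1.02 ^ k * t ≤ √t := by
    calc 1.02 ^ k * t = 1.02 ^ k * √t * √t := by rw [mul_assoc, Real.mul_self_sqrt dist_nonneg]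
      _ ≤ √t := mul_le_of_le_one_left (Real.sqrt_nonneg t) hpow
  have ht : t ≤ √t := Real.le_sqrt_of_sq_le (pow_le_of_le_one dist_nonneg hxy two_ne_zero)
  linarith [(abs_le.1 (h.abs_dist_limit_sub_le hx hy k)).2, h.dist_le_pow_mul hx hy k]

theorem mul_sqrt_le_dist_limit (h : IsApproxLimit S F b f) (hx : x ∈ S) (hy : y ∈ S)
    (hxy : dist x y ≤ 1) : 1 / 4 * (dist x y * √(dist x y)) ≤ dist (f x) (f y) := by
  rcases eq_or_ne x y with rfl | hne
  · rw [dist_self]; simp only [zero_mul, mul_zero, dist_self, le_refl]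
  obtain ⟨n, hn, hsqrt⟩ := h.exists_radK_le_dist_and_sqrt_le hx hy hne hxy
  linarith [mul_le_mul_of_nonneg_left hsqrt (dist_nonneg (x := x) (y := y)),
    h.mul_dist_le_dist_limit hx hy hn, h.pow_mul_le_dist hx hy n,
    dist_nonneg (x := F n x) (y := F n y)]

theorem injOn (h : IsApproxLimit S F b f) : InjOn f S := fun x hx y hy hxy => by
  by_contra hne
  obtain ⟨n, hn⟩ := h.exists_radK_le_dist hx hy hne
  have hle := h.mul_dist_le_dist_limit hx hy hn
  rw [hxy, dist_self] at hle
  linarith [radK_pos n]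

theorem exists_dist_limit_lt (h : IsApproxLimit S F b f) (k : ℕ) {e : ℝ} (he : 0 < e) :
    ∃ c > 0, ∀ x ∈ S, ∀ y ∈ S, dist (F k x) (F k y) < c → dist (f x) (f y) < e := by
  obtain ⟨n, hkn, hn⟩ := exists_le_radK_lt he k
  obtain ⟨m, rfl⟩ := Nat.exists_eq_add_of_le hkn
  refine ⟨e / 2 / 1.02 ^ m, by positivity, fun x hx y hy hxy => ?_⟩
  rw [lt_div_iff₀' (by positivity)] at hxy
  linarith [(abs_le.1 (h.abs_dist_limit_sub_le hx hy (k + m))).2, h.dist_add_le hx hy k m]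

theorem continuousOn_comp (h : IsApproxLimit S F b f) {T : Type*} [PseudoMetricSpace T] {D : Set T}
    {G : T → E} {k : ℕ} (hGS : MapsTo G D S) (hG : ContinuousOn (fun w => F k (G w)) D) :
    ContinuousOn (fun w => f (G w)) D := by
  refine Metric.continuousOn_iff.2 fun w hw e he => ?_
  obtain ⟨c, hc, hcf⟩ := h.exists_dist_limit_lt k he
  obtain ⟨c', hc', hGc⟩ := Metric.continuousOn_iff.1 hG w hw c hc
  exact ⟨c', hc', fun v hv hvw => hcf _ (hGS hv) _ (hGS hw) (hGc v hv hvw)⟩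

theorem continuousOn (h : IsApproxLimit S F b f) : ContinuousOn f S :=
  h.continuousOn_comp (k := 0) (mapsTo_id S) (continuousOn_id.congr fun x _ => h.zero x)

theorem dist_le_two_mul (h : IsApproxLimit S F b f) (hx : x ∈ S) (k : ℕ) :
    dist (F k x) (f x) ≤ 2 * b * radK k :=
  (h.dist_le x hx k).trans <| by gcongr; exacts [(radK_pos k).le, h.b_nonneg, by norm_num]

theorem dist_le_div (h : IsApproxLimit S F b f) (hx : x ∈ S) (k : ℕ) :
    dist (F k x) (f x) ≤ radK k / 50 := by
  linarith [h.dist_le_two_mul hx k, mul_le_mul_of_nonneg_right h.b_le (radK_pos k).le]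

end IsApproxLimit

end Approximation

/-! ### Flatness and content of the limit -/

section Content

theorem addHaar_le_ediam_pow_mul {E : Type*} [NormedAddCommGroup E] [NormedSpace ℝ E]
    [FiniteDimensional ℝ E] [Nontrivial E] [MeasurableSpace E] [BorelSpace E] (μ : Measure E)
    [μ.IsAddHaarMeasure] (s : Set E) :
    μ s ≤ ediam s ^ Module.finrank ℝ E * μ (ball 0 1) := by
  rcases s.eq_empty_or_nonempty with rfl | ⟨x, hx⟩
  · rw [measure_empty]; exact zero_le
  by_cases hs : ediam s = ∞
  · rw [hs, ENNReal.top_pow Module.finrank_pos.ne',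
      ENNReal.top_mul (measure_ball_pos μ 0 one_pos).ne']
    exact le_top
  have hsub : s ⊆ closedBall x (ediam s).toReal := fun y hy => by
    rw [mem_closedBall, dist_edist]
    exact ENNReal.toReal_mono hs (edist_le_ediam_of_mem hy hx)
  calc μ s ≤ μ (closedBall x (ediam s).toReal) := measure_mono hsub
    _ = ediam s ^ Module.finrank ℝ E * μ (ball 0 1) := by
      rw [Measure.addHaar_closedBall μ x ENNReal.toReal_nonneg,
        ENNReal.ofReal_pow ENNReal.toReal_nonneg, ENNReal.ofReal_toReal hs]

theorem le_hContent_of_closedBall_subset {H E : Type*} [NormedAddCommGroup H]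
    [NormedAddCommGroup E] [NormedSpace ℝ E] [FiniteDimensional ℝ E] [Nontrivial E] {A : Set H}
    {φ : H → E} (hφ : LipschitzWith 1 φ) {R : ℝ} (hR : 0 ≤ R) (hA : closedBall 0 R ⊆ φ '' A) :
    ENNReal.ofReal (R ^ Module.finrank ℝ E) ≤ hContent (Module.finrank ℝ E) A := by
  borelize E
  let μ : Measure E := Measure.addHaar
  refine le_iInf₂ fun t ht => ?_
  have hcov : closedBall 0 R ⊆ ⋃ n, φ '' t n := by
    rw [← image_iUnion]
    exact hA.trans (image_mono ht)
  have hdiam (n) : ediam (φ '' t n) ≤ ediam (t n) := by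
    simpa only [ENNReal.coe_one, one_mul] using hφ.ediam_image_le (t n)
  rw [← ENNReal.mul_le_mul_iff_left (measure_ball_pos μ (0 : E) one_pos).ne'
    measure_ball_lt_top.ne, ← Measure.addHaar_closedBall μ 0 hR, ← ENNReal.tsum_mul_right]
  calc μ (closedBall 0 R) ≤ ∑' n, μ (φ '' t n) :=
        (measure_mono hcov).trans (measure_iUnion_le _)
    _ ≤ ∑' n, ediam (t n) ^ (Module.finrank ℝ E : ℝ) * μ (ball 0 1) := by
        gcongr with n
        rw [ENNReal.rpow_natCast]
        refine (addHaar_le_ediam_pow_mul μ _).trans ?_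
        gcongr
        exact hdiam n

theorem hContent_mono {H : Type*} [NormedAddCommGroup H] {d : ℕ} {A B : Set H} (h : A ⊆ B) :
    hContent d A ≤ hContent d B :=
  le_iInf₂ fun t ht => iInf₂_le t (h.trans ht)

theorem IsDProj.le_hContent_of_mapsTo {H : Type*} [NormedAddCommGroup H] [InnerProductSpace ℝ H]
    {d : ℕ} (hd : 1 ≤ d) {Q : H →L[ℝ] H} (hQ : IsDProj d Q) {A : Set H} {g : H → H} {R : ℝ}
    (hR : 0 < R) (hg : ContinuousOn g {w | Q w = w ∧ ‖w‖ ≤ R})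
    (hgA : MapsTo g {w | Q w = w ∧ ‖w‖ ≤ R} A) (z : H)
    (hgz : ∀ w, Q w = w → ‖w‖ ≤ R → ‖Q (g w - z) - w‖ ≤ R / 2) :
    ENNReal.ofReal ((R / 2) ^ d) ≤ hContent d A := by
  obtain ⟨W, _, rfl, rfl⟩ := id hQ
  have : Nontrivial W := Module.nontrivial_of_finrank_pos hd
  have hlip : LipschitzWith 1 fun y : H => W.orthogonalProjectionOnto (y - z) :=
    LipschitzWith.of_dist_le_mul fun x y => by
      rw [dist_eq_norm, dist_eq_norm, ← map_sub, sub_sub_sub_cancel_right, NNReal.coe_one, one_mul]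
      exact hQ.norm_apply_le _
  refine le_hContent_of_closedBall_subset hlip (by positivity) fun p hp => ?_
  rw [mem_closedBall_zero_iff] at hp
  obtain ⟨w, hw, hwR, hwp⟩ := hQ.exists_apply_eq_of_norm_sub_le (g := fun w => g w - z) hR
    (hg.sub continuousOn_const) hgz (Submodule.starProjection_eq_self_iff.2 p.2)
    (by rw [← Submodule.coe_norm]; linarith)
  exact ⟨g w, hgA ⟨hw, hwR⟩, Subtype.ext hwp⟩

end Content

section Limit

variable {H : Type*} [NormedAddCommGroup H] [InnerProductSpace ℝ H]
  {d : ℕ} {S : Set H} {F : ℕ → H → H} {b : ℝ} {f : H → H} {Q : H →L[ℝ] H} {x x' z : H}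

namespace IsApproxLimit

theorem norm_limit_sub_sub_apply_le (h : IsApproxLimit S F b f) (hQ : IsDProj d Q) {k : ℕ}
    (hg : IsGraph (F k '' S) (F k x) Q b (radK k)) (hx : x ∈ S) (hx' : x' ∈ S)
    (hxx : dist (f x') (f x) ≤ radK k) :
    ‖(f x' - F k x) - Q (f x' - F k x)‖ ≤ 6 * b * radK k := by
  have hr := radK_pos k
  have hfx' := h.dist_le_two_mul hx' k
  have hdist : dist (F k x') (F k x) ≤ 2 * radK k := by
    linarith [dist_triangle4 (F k x') (f x') (f x) (F k x), dist_comm (f x) (F k x),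
      h.dist_le_div hx k, h.dist_le_div hx' k]
  have hcone := hg.cone _ (mem_image_of_mem _ hx') _ (mem_image_of_mem _ hx) (by linarith)
    (by rw [dist_self]; positivity)
  have hsplit : (f x' - F k x) - Q (f x' - F k x) = ((F k x' - F k x) - Q (F k x' - F k x)) -
      ((F k x' - f x') - Q (F k x' - f x')) := by
    simp only [map_sub]; abel
  rw [dist_eq_norm] at hdist hfx'
  rw [hsplit]
  refine (norm_sub_le_of_le hcone ((hQ.norm_sub_apply_le _).trans hfx')).trans ?_
  linarith [mul_le_mul_of_nonneg_left hdist h.b_nonneg, mul_nonneg h.b_nonneg hr.le]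

theorem exists_dist_limit_le (h : IsApproxLimit S F b f) {k : ℕ}
    (hg : IsGraph (F k '' S) (F k x) Q b (radK k)) (hx : x ∈ S) {w : H}
    (hw : Q (w - F k x) = w - F k x) (hwx : dist w (f x) ≤ radK k) :
    ∃ x' ∈ S, dist w (f x') ≤ 6 * b * radK k := by
  have hr := radK_pos k
  have hwF : ‖w - F k x‖ ≤ 3 * radK k := by
    rw [← dist_eq_norm]
    linarith [dist_triangle_right w (F k x) (f x), h.dist_le_div hx k]
  obtain ⟨_, ⟨x', hx', rfl⟩, hdist, hx'w⟩ := hg.full _ hw hwF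
  have hcone := hg.cone _ (mem_image_of_mem _ hx') _ (mem_image_of_mem _ hx) hdist
    (by rw [dist_self]; positivity)
  rw [hx'w, sub_sub_sub_cancel_right, ← dist_eq_norm, ← dist_eq_norm] at hcone
  refine ⟨x', hx', ?_⟩
  linarith [dist_triangle_left w (f x') (F k x'), h.dist_le_two_mul hx' k,
    mul_le_mul_of_nonneg_left hdist h.b_nonneg]

theorem exists_dBall_limit_le (h : IsApproxLimit S F b f)
    (hG : ∀ k, IsGraphical d (F k '' S) b (radK k)) (hz : z ∈ f '' S) {t : ℝ} (ht : 0 < t)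
    (ht1 : t ≤ 1) : ∃ P, IsDPlane d P ∧ dBall z t (f '' S) P ≤ 60 * b := by
  obtain ⟨x, hx, rfl⟩ := hz
  obtain ⟨k, hkt, htk⟩ := exists_radK_lt_le ht ht1
  rw [radK_succ] at hkt
  have hb := h.b_nonneg
  have hbt : 6 * b * radK k ≤ 60 * b * t := by
    linarith [mul_le_mul_of_nonneg_left hkt.le hb]
  obtain ⟨Q, hQ, hg⟩ := hG k _ (mem_image_of_mem _ hx)
  have hP := hQ.hasDirection (F k x)
  refine ⟨_, hP.isDPlane, dBall_le ht (by positivity) ?_ fun w hw hwx => ?_⟩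
  · rintro _ ⟨x', hx', rfl⟩ hxx
    rw [hP.infDist_eq (show F k x ∈ _ by simp)]
    exact (h.norm_limit_sub_sub_apply_le hQ hg hx hx' (hxx.trans htk)).trans hbt
  · obtain ⟨x', hx', hwx'⟩ := h.exists_dist_limit_le hg hx hw (hwx.trans htk)
    exact (infDist_le_dist_of_mem (mem_image_of_mem f hx')).trans (hwx'.trans hbt)

theorem le_hContent_limit_of_section (h : IsApproxLimit S F b f) (hd : 1 ≤ d) (hQ : IsDProj d Q)
    (hx : x ∈ S) {k : ℕ} {t : ℝ} (ht : radK k ≤ t) {A : H → H}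
    (hAc : ContinuousOn A {w | Q w = w ∧ ‖w‖ ≤ t / 4})
    (hA : ∀ w, Q w = w → ‖w‖ ≤ t / 4 →
      A w ∈ F k '' S ∧ dist (A w) (F k x) ≤ t / 2 ∧ Q (A w - F k x) = w) :
    ENNReal.ofReal ((t / 4 / 2) ^ d) ≤ hContent d (f '' S ∩ closedBall (f x) t) := by
  have ht0 := (radK_pos k).trans_le ht
  choose! G hGS hGA using fun w hw hwt => (hA w hw hwt).1
  have hclose (w) (hw : Q w = w) (hwt : ‖w‖ ≤ t / 4) : dist (A w) (f (G w)) ≤ t / 50 := by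
    rw [← hGA w hw hwt]
    exact (h.dist_le_div (hGS w hw hwt) k).trans (by gcongr)
  refine hQ.le_hContent_of_mapsTo hd (g := fun w => f (G w)) (by positivity)
    (h.continuousOn_comp (fun w hw => hGS w hw.1 hw.2) (hAc.congr fun w hw => hGA w hw.1 hw.2))
    (fun w hw => ⟨mem_image_of_mem f (hGS w hw.1 hw.2), ?_⟩) (F k x) fun w hw hwt => ?_
  · refine mem_closedBall.2 (?_ : dist (f (G w)) (f x) ≤ t)
    linarith [dist_triangle4_left (A w) (F k x) (f (G w)) (f x), hclose w hw.1 hw.2,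
      (hA w hw.1 hw.2).2.1, h.dist_le_div hx k]
  · have hsplit : Q (f (G w) - F k x) - w = Q (f (G w) - A w) := by
      rw [← sub_add_sub_cancel (f (G w)) (A w) (F k x), map_add, (hA w hw hwt).2.2,
        add_sub_cancel_right]
    calc ‖Q (f (G w) - F k x) - w‖ ≤ dist (A w) (f (G w)) := by
          rw [hsplit, dist_comm, dist_eq_norm]; exact hQ.norm_apply_le _
      _ ≤ t / 4 / 2 := by linarith [hclose w hw hwt]

theorem le_hContent_limit_of_le_one (h : IsApproxLimit S F b f) (hd : 1 ≤ d)
    (hG : ∀ k, IsGraphical d (F k '' S) b (radK k)) (hx : x ∈ S) {t : ℝ} (ht : 0 < t)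
    (ht1 : t ≤ 1) : ENNReal.ofReal ((t / 80) ^ d) ≤ hContent d (f '' S ∩ closedBall (f x) t) := by
  obtain ⟨k, hkt, htk⟩ := exists_radK_lt_le ht ht1
  have hr := radK_pos (k + 1)
  have hrt : t / 80 ≤ radK (k + 1) / 4 / 2 := by rw [radK_succ]; linarith
  generalize k + 1 = n at *
  obtain ⟨Q, hQ, hg⟩ := hG n _ (mem_image_of_mem _ hx)
  obtain ⟨A, hA0, hA, hAid⟩ := hg.exists_section (mem_image_of_mem _ hx) hr.le h.b_le
  have h3r {w : H} (hw : ‖w‖ ≤ radK n / 4) : ‖w‖ ≤ 3 * radK n := by linarith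
  have hAc : ContinuousOn A {w | Q w = w ∧ ‖w‖ ≤ radK n / 4} :=
    ApproximatesLinearOn.continuousOn (f' := .id ℝ H) (c := 1 / 50)
      fun v hv w hw => hAid v w hv.1 (h3r hv.2) hw.1 (h3r hw.2)
  have hAx (w) (hw : Q w = w) (hwr : ‖w‖ ≤ radK n / 4) : dist (A w) (F n x) ≤ radK n / 2 := by
    have hAw := hAid w 0 hw (h3r hwr) (map_zero Q) (by rw [norm_zero]; positivity)
    rw [hA0, sub_zero] at hAw
    rw [dist_eq_norm]
    linarith [norm_sub_norm_le (A w - F n x) w]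
  calc ENNReal.ofReal ((t / 80) ^ d) ≤ ENNReal.ofReal ((radK n / 4 / 2) ^ d) := by gcongr
    _ ≤ hContent d (f '' S ∩ closedBall (f x) (radK n)) :=
        h.le_hContent_limit_of_section hd hQ hx le_rfl hAc fun w hw hwr =>
          ⟨(hA w hw (h3r hwr)).1, hAx w hw hwr, (hA w hw (h3r hwr)).2⟩
    _ ≤ hContent d (f '' S ∩ closedBall (f x) t) :=
        hContent_mono (inter_subset_inter_right _ (closedBall_subset_closedBall hkt.le))

theorem le_hContent_limit_of_one_le (h : IsApproxLimit S F b f) (hd : 1 ≤ d)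
    (hS : HasDirection d S Q) (hx : x ∈ S) {t : ℝ} (ht : 1 ≤ t) :
    ENNReal.ofReal ((t / 80) ^ d) ≤ hContent d (f '' S ∩ closedBall (f x) t) := by
  refine (ENNReal.ofReal_le_ofReal ?_).trans (h.le_hContent_limit_of_section (k := 0) hd hS.isDProj
    hx (radK_zero.trans_le ht) (A := fun w => x + w) (by fun_prop) fun w hw hwt => ⟨?_, ?_, ?_⟩)
  · exact pow_le_pow_left₀ (by positivity) (by linarith) d
  · exact ⟨x + w, hS.add_mem hx hw, h.zero _⟩
  · rw [h.zero, dist_self_add_left]; linarith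
  · rw [h.zero, add_sub_cancel_left, hw]

theorem le_hContent_limit (h : IsApproxLimit S F b f) (hd : 1 ≤ d) (hS : HasDirection d S Q)
    (hG : ∀ k, IsGraphical d (F k '' S) b (radK k)) (hz : z ∈ f '' S) {t : ℝ} (ht : 0 < t) :
    ENNReal.ofReal ((t / 80) ^ d) ≤ hContent d (f '' S ∩ closedBall z t) := by
  obtain ⟨x, hx, rfl⟩ := hz
  rcases le_total t 1 with ht1 | ht1
  · exact h.le_hContent_limit_of_le_one hd hG hx ht ht1
  · exact h.le_hContent_limit_of_one_le hd hS hx ht1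

end IsApproxLimit

theorem HasDirection.isCompact_inter_closedBall (hS : HasDirection d S Q) (z : H) (r : ℝ) :
    IsCompact (S ∩ closedBall z r) := by
  obtain ⟨p, hp⟩ := hS.nonempty
  have hSp : S = {y | Q (y - p) = y - p} := ext fun y => hS.mem_iff hp
  have hclosed : IsClosed S := by
    rw [hSp]
    exact isClosed_eq (by fun_prop) (by fun_prop)
  obtain ⟨φ, ψ, hφ, -, -, hψφ⟩ := hS.isDProj.exists_isometry
  refine ((isCompact_closedBall 0 (r + dist z p)).image (f := fun v => p + ψ v)
    (by fun_prop)).of_isClosed_subset (hclosed.inter isClosed_closedBall) ?_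
  rintro y ⟨hy, hyz⟩
  refine ⟨φ (y - p), ?_, ?_⟩
  · rw [mem_closedBall_zero_iff, hφ, (hS.mem_iff hp).1 hy, ← dist_eq_norm]
    linarith [dist_triangle y z p, mem_closedBall.1 hyz]
  · beta_reduce
    rw [hψφ, (hS.mem_iff hp).1 hy, add_sub_cancel]

theorem HasDirection.isClosed_image (hS : HasDirection d S Q) (hf : ContinuousOn f S) {c : ℝ}
    (hfc : ∀ x ∈ S, dist x (f x) ≤ c) : IsClosed (f '' S) := by
  refine isClosed_of_closure_subset fun z hz => ?_
  have hclosed : IsClosed (f '' (S ∩ closedBall z (c + 1))) :=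
    ((hS.isCompact_inter_closedBall z _).image_of_continuousOn (hf.mono inter_subset_left)).isClosed
  suffices z ∈ closure (f '' (S ∩ closedBall z (c + 1))) from
    image_mono inter_subset_left (hclosed.closure_subset this)
  refine Metric.mem_closure_iff.2 fun e he => ?_
  obtain ⟨_, ⟨x, hx, rfl⟩, hzx⟩ := Metric.mem_closure_iff.1 hz (min e 1) (by positivity)
  rw [lt_min_iff] at hzx
  refine ⟨f x, ⟨x, ⟨hx, ?_⟩, rfl⟩, hzx.1⟩
  rw [mem_closedBall]
  linarith [hfc x hx, dist_triangle_right x z (f x)]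

theorem IsApproxLimit.iInter_closure_subset_image (h : IsApproxLimit S F b f)
    (hS : HasDirection d S Q) {X : ℕ → Set H}
    (hX : ∀ k, ∀ p ∈ X k, ∃ y ∈ F k '' S, dist y p ≤ radK k) :
    ⋂ K : ℕ, closure (⋃ k, ⋃ (_ : K ≤ k), X k) ⊆ f '' S := by
  intro z hz
  have hclosed := hS.isClosed_image h.continuousOn fun x hx => by
    simpa only [h.zero] using h.dist_le_div hx 0
  rw [← hclosed.closure_eq, Metric.mem_closure_iff]
  intro e he
  obtain ⟨K, -, hK⟩ := exists_le_radK_lt (show 0 < e / 3 by positivity) 0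
  obtain ⟨p, hp, hzp⟩ := Metric.mem_closure_iff.1 (mem_iInter.1 hz K) (e / 3) (by positivity)
  simp only [mem_iUnion] at hp
  obtain ⟨k, hKk, hp⟩ := hp
  obtain ⟨_, ⟨x, hx, rfl⟩, hxp⟩ := hX k p hp
  have hkK : radK k ≤ radK K := pow_le_pow_of_le_one (by norm_num) (by norm_num) hKk
  refine ⟨f x, mem_image_of_mem f hx, ?_⟩
  linarith [dist_triangle4 z p (F k x) (f x), dist_comm p (F k x), h.dist_le_div hx k, radK_pos k]

end Limit

/-! ### The sequence of stages -/

section Stages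

variable {H : Type*} [NormedAddCommGroup H] [InnerProductSpace ℝ H]
  {d : ℕ} {S : Set H} {R R' : H →L[ℝ] H} {y : H} {δ a b : ℝ}

namespace HasDirection

theorem isGraph (hS : HasDirection d S R) (hy : y ∈ S) {r : ℝ} (hr : 0 ≤ r) :
    IsGraph S y R 0 r where
  cone u hu v hv _ _ := by rw [(hS.mem_iff hv).1 hu, sub_self, norm_zero, zero_mul]
  full w hw hwr := ⟨y + w, hS.add_mem hy hw, by rw [dist_self_add_left]; linarith,
    by rw [add_sub_cancel_left, hw]⟩

theorem isGraph_of_norm_sub_le (hS : HasDirection d S R) (hR' : IsDProj d R') (hy : y ∈ S)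
    {r : ℝ} (hr : 0 < r) (hRR : ‖R' - R‖ ≤ a) (ha : a ≤ 1 / 100) : IsGraph S y R' a r := by
  have hgraph := (hS.isGraph hy (r := 10 * r) (by positivity)).image (σ := fun u => u) hS.isDProj
    hR' (hRR.trans ha) hy (by positivity) (by norm_num)
    (fun u _ v _ _ _ => by rw [sub_self, norm_zero]; positivity)
    (fun u _ => by rw [dist_self]; positivity) (a' := a) fun u hu v hv _ _ => by
      have hcone := (R' - R).le_of_opNorm_le hRR (u - v)
      rwa [sub_apply, (hS.mem_iff hv).1 hu, norm_sub_rev] at hcone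
  rwa [image_id', mul_div_cancel_left₀ r (by norm_num)] at hgraph

theorem isStage (hS : HasDirection d S R) (hc : IsAdmissible d δ a b) {X : Set H}
    {Q : H → H →L[ℝ] H} (hQ : ∀ p ∈ X, IsDProj d (Q p)) (hRQ : ∀ p ∈ X, ‖R - Q p‖ ≤ δ)
    (hX : ∀ p ∈ X, infDist p S ≤ δ) : IsStage d X Q 1 a b S where
  graphical y hy := by
    have ha := hc.a_nonneg
    refine ⟨R, hS.isDProj, (hS.isGraph hy zero_le_one).mono ?_⟩
    exact (by positivity : (0 : ℝ) ≤ (8 * packingConst d + 4) * a).trans hc.a_le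
  flat_net y hy p hp hyp := by
    have hyR := hX p hp
    have hsplit : (y - p) - Q p (y - p) =
        (R - Q p) (y - p) - ((p - y) - R (p - y)) := by
      simp only [sub_apply, map_sub]; abel
    rw [hS.infDist_eq hy] at hyR
    rw [dist_eq_norm] at hyp
    rw [hsplit]
    refine (norm_sub_le_of_le ((R - Q p).le_of_opNorm_le_of_le (hRQ p hp) hyp) hyR).trans ?_
    linarith [hc.mul_δ_le, hc.δ_nonneg]
  graph_net y hy p hp _ := by
    refine hS.isGraph_of_norm_sub_le (hQ p hp) hy one_pos ?_ (by linarith [hc.a_le_div])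
    rw [norm_sub_rev]
    linarith [hRQ p hp, hc.mul_δ_le, hc.δ_nonneg]
  near p hp := by
    obtain ⟨y, hy⟩ := hS.nonempty
    refine ⟨y + R (p - y), hS.add_apply_mem hy _, ?_⟩
    rw [dist_comm, dist_eq_norm, ← sub_sub, ← hS.infDist_eq hy]
    linarith [hX p hp, hc.mul_δ_le, hc.δ_nonneg, hc.a_le_div]

end HasDirection

/-- The composition of the maps `netMap (X i) (Q i) (radK i)` for `i < k`, which pushes points
successively towards the planes of the nets at the scales `10⁻ⁱ`. -/
noncomputable def netSeq (X : ℕ → Set H) (Q : ℕ → H → H →L[ℝ] H) : ℕ → H → H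
  | 0, x => x
  | k + 1, x => netMap (X k) (Q k) (radK k) (netSeq X Q k x)

variable {X : ℕ → Set H} {Q : ℕ → H → H →L[ℝ] H}

theorem isStage_netSeq (h0 : IsStage d (X 0) (Q 0) 1 a b S)
    (hX : ∀ k, IsFlatNet d (X k) (Q k) (radK k) δ) (hc : IsAdmissible d δ a b)
    (hn : ∀ k, IsNextNet d (X k) (X (k + 1)) (Q k) (Q (k + 1)) (radK k) δ) (k : ℕ) :
    IsStage d (X k) (Q k) (radK k) a b (netSeq X Q k '' S) := by
  induction k with
  | zero =>
    rw [radK_zero]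
    convert h0
    exact image_id' S
  | succ k ih =>
    have hnext := ih.next (hX k) hc (hn k)
    rwa [image_image, ← radK_succ] at hnext

theorem isApprox_netSeq (hX : ∀ k, IsFlatNet d (X k) (Q k) (radK k) δ)
    (hc : IsAdmissible d δ a b)
    (h : ∀ k, IsStage d (X k) (Q k) (radK k) a b (netSeq X Q k '' S)) :
    IsApprox S (netSeq X Q) b := by
  have ha := hc.a_nonneg
  have hNa : 0 ≤ packingConst d * a := by positivity
  have hab := hc.a_le
  refine ⟨by linarith, hc.b_le, fun x => rfl, fun k x hx => ?_, fun k x hx y hy hxy => ?_⟩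
  · refine ((h k).dist_netMap_le (hX k) ha (mem_image_of_mem _ hx)).trans ?_
    exact mul_le_mul_of_nonneg_right (by linarith) (radK_pos k).le
  · have hy' := mem_image_of_mem (netSeq X Q k) hy
    simp only [dist_eq_norm] at hxy ⊢
    refine (abs_norm_sub_norm_le _ _).trans <| ((h k).norm_netMap_sub_sub_le (hX k) ha hy'
      (mem_image_of_mem _ hx) hy' (by rwa [dist_eq_norm]) ?_).trans ?_
    · rw [dist_self]; exact (radK_pos k).le
    · exact mul_le_mul_of_nonneg_right (by linarith) (norm_nonneg _)

end Stages

/-! ### Coherent collections of balls and planes -/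

section CCBP

variable {H : Type*} [NormedAddCommGroup H] [InnerProductSpace ℝ H]

/-- A coherent collection of balls and planes (CCBP) with parameter `ε`, in the sense of David and
Toro: `X k` is the set of centres `x_{j,k}`, and `P k p` is the plane attached to the centre
`p ∈ X k`. The values `P k p` for `p ∉ X k` are irrelevant. -/
structure IsCCBP (d : ℕ) (ε : ℝ) (P₀ : Set H) (X : ℕ → Set H) (P : ℕ → H → Set H) : Prop where
  isDPlane_root : IsDPlane d P₀
  separated : ∀ k, ∀ p ∈ X k, ∀ q ∈ X k, p ≠ q → radK k ≤ dist p q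
  isDPlane : ∀ k, ∀ p ∈ X k, IsDPlane d (P k p) ∧ p ∈ P k p
  parent : ∀ k : ℕ, 1 ≤ k → ∀ p ∈ X k, ∃ q ∈ X (k - 1), dist p q ≤ 2 * radK (k - 1)
  infDist_le : ∀ p ∈ X 0, infDist p P₀ ≤ ε
  dBall_root_le : ∀ p ∈ X 0, dBall p 100 (P 0 p) P₀ ≤ ε
  dBall_lt : ∀ k l : ℕ, l ≤ k + 2 → k ≤ l + 2 →
    ∀ x ∈ X k, ∀ p ∈ X k, ∀ u ∈ X l, dist x p ≤ 100 * radK k → dist x u ≤ 100 * radK l →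
      dBall u (10000 * radK l) (P k p) (P l u) < ε

/-- The ratio between the flatness of the stages of the construction and the parameter `ε` of the
collection: the value of `b / ε` for which both inequalities of `IsAdmissible` relating
`δ = 10000 * ε`, `a` and `b` are equalities. -/
noncomputable def flatnessConst (d : ℕ) : ℝ :=
  (8 * packingConst d + 4) * ((52 * packingConst d + 160) * 10000)

theorem flatnessConst_pos (d : ℕ) : 0 < flatnessConst d := by unfold flatnessConst; positivity

theorem isAdmissible_flatnessConst {d : ℕ} {ε : ℝ} (hε : 0 ≤ ε)
    (hb : flatnessConst d * ε ≤ 1 / 100) :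
    IsAdmissible d (10000 * ε) ((52 * packingConst d + 160) * (10000 * ε))
      (flatnessConst d * ε) where
  δ_nonneg := by positivity
  δ_le := le_rfl
  a_le := by unfold flatnessConst; linarith
  b_le := hb

namespace IsCCBP

variable {d : ℕ} {ε : ℝ} {P₀ : Set H} {X : ℕ → Set H} {P : ℕ → H → Set H}
  {Q : ℕ → H → H →L[ℝ] H} {Q₀ : H →L[ℝ] H}

theorem isCompatible (h : IsCCBP d ε P₀ X P)
    (hQ : ∀ k, ∀ p ∈ X k, HasDirection d (P k p) (Q k p)) (hε : 0 ≤ ε) (hε3 : ε ≤ 1 / 3)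
    {k l : ℕ} (hlk : l ≤ k + 2) (hkl : k ≤ l + 2) :
    IsCompatible (X l) (X k) (Q l) (Q k) (radK l) (10000 * ε) := by
  have hr := radK_pos l
  have hd : ∀ p ∈ X l, ∀ q ∈ X k, dist q p ≤ 100 * radK l →
      dBall p (10000 * radK l) (P k q) (P l p) < ε := fun p hp q hq hqp =>
    h.dBall_lt k l hlk hkl q hq q hq p hp (by rw [dist_self]; linarith [radK_pos k]) hqp
  refine ⟨fun p hp q hq hqp => ?_, fun p hp q hq hqp => ?_⟩
  · have hpq := (hd p hp q hq hqp).le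
    rw [norm_sub_rev]
    refine ((hQ k q hq).norm_sub_le_of_dBall_le (hQ l p hp) (h.isDPlane l p hp).2
      (by positivity) hε3 hpq).trans ?_
    linarith
  · rw [← (hQ l p hp).infDist_eq (h.isDPlane l p hp).2]
    refine (infDist_le_of_dBall_le (by positivity) (hQ l p hp).nonempty (hd p hp q hq hqp).le
      (h.isDPlane k q hq).2 (by linarith)).trans_eq (by ring)

theorem isFlatNet (h : IsCCBP d ε P₀ X P)
    (hQ : ∀ k, ∀ p ∈ X k, HasDirection d (P k p) (Q k p)) (hε : 0 ≤ ε) (hε4 : ε ≤ 1 / 40000)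
    (k : ℕ) :
    IsFlatNet d (X k) (Q k) (radK k) (10000 * ε) where
  toIsCompatible := h.isCompatible hQ hε (by linarith) (by lia) (by lia)
  r_pos := radK_pos k
  δ_le := by linarith
  isDProj p hp := (hQ k p hp).isDProj
  separated := h.separated k

theorem isNextNet (h : IsCCBP d ε P₀ X P)
    (hQ : ∀ k, ∀ p ∈ X k, HasDirection d (P k p) (Q k p)) (hε : 0 ≤ ε) (hε3 : ε ≤ 1 / 3)
    (k : ℕ) :
    IsNextNet d (X k) (X (k + 1)) (Q k) (Q (k + 1)) (radK k) (10000 * ε) where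
  toIsCompatible := h.isCompatible hQ hε hε3 (by lia) (by lia)
  isDProj q hq := (hQ (k + 1) q hq).isDProj
  parent := h.parent (k + 1) (by lia)

theorem isStage_root (h : IsCCBP d ε P₀ X P)
    (hQ : ∀ k, ∀ p ∈ X k, HasDirection d (P k p) (Q k p)) (hQ₀ : HasDirection d P₀ Q₀)
    (hε : 0 ≤ ε) (hε3 : ε ≤ 1 / 3) {a b : ℝ} (hc : IsAdmissible d (10000 * ε) a b) :
    IsStage d (X 0) (Q 0) 1 a b P₀ := by
  refine hQ₀.isStage hc (fun p hp => (hQ 0 p hp).isDProj) (fun p hp => ?_)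
    fun p hp => (h.infDist_le p hp).trans (by linarith)
  have hp₀ := h.dBall_root_le p hp
  rw [dBall_comm] at hp₀
  refine (hQ₀.norm_sub_le_of_dBall_le (hQ 0 p hp) (h.isDPlane 0 p hp).2 (by norm_num) hε3
    hp₀).trans ?_
  linarith

theorem exists_isApprox (h : IsCCBP d ε P₀ X P) (hd : 1 ≤ d) (hε : 0 ≤ ε)
    (hb : flatnessConst d * ε ≤ 1 / 100) :
    ∃ (F : ℕ → H → H) (Q₀ : H →L[ℝ] H), HasDirection d P₀ Q₀ ∧
      IsApprox P₀ F (flatnessConst d * ε) ∧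
      (∀ k, IsGraphical d (F k '' P₀) (flatnessConst d * ε) (radK k)) ∧
      ∀ k, ∀ p ∈ X k, ∃ y ∈ F k '' P₀, dist y p ≤ radK k := by
  choose! Q hQ using fun k p hp => (h.isDPlane k p hp).1.exists_hasDirection hd
  obtain ⟨Q₀, hQ₀⟩ := h.isDPlane_root.exists_hasDirection hd
  have hc := isAdmissible_flatnessConst hε hb
  have hε4 : ε ≤ 1 / 40000 := by linarith [hc.mul_δ_le, hc.a_le_div]
  have hnet := h.isFlatNet hQ hε hε4
  have hstage := isStage_netSeq (h.isStage_root hQ hQ₀ hε (by linarith) hc) hnet hc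
    (h.isNextNet hQ hε (by linarith))
  exact ⟨netSeq X Q, Q₀, hQ₀, isApprox_netSeq hnet hc hstage, fun k => (hstage k).graphical,
    fun k => (hstage k).near⟩

end IsCCBP

end CCBP

theorem reifenberg_parametrization_general.{u} (d : ℕ) (hd : 1 ≤ d) :
    ∃ ε₀ C c : ℝ, 0 < ε₀ ∧ 0 < C ∧ 0 < c ∧
      ∀ (H : Type u) [NormedAddCommGroup H] [InnerProductSpace ℝ H] [CompleteSpace H]
        (ε : ℝ), 0 < ε → ε < ε₀ →
      ∀ (P₀ : Set H) (X : ℕ → Set H) (P : ℕ → H → Set H), IsCCBP d ε P₀ X P →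
        ∃ (τ : ℝ) (f : H → H), 0 < τ ∧ τ < 1 ∧
          ContinuousOn f P₀ ∧ Set.InjOn f P₀ ∧
          (∀ x ∈ P₀, dist (f x) x ≤ C * ε) ∧
          (∀ x ∈ P₀, ∀ y ∈ P₀, dist x y ≤ 1 →
            (1 / 4) * dist x y ^ (1 + τ) ≤ dist (f x) (f y) ∧
              dist (f x) (f y) ≤ 10 * dist x y ^ (1 - τ)) ∧
          (⋂ K : ℕ, closure (⋃ k, ⋃ (_ : K ≤ k), X k)) ⊆ f '' P₀ ∧
          (∀ z ∈ f '' P₀, ∀ t : ℝ, 0 < t → t < 1 →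
            ∃ Pl : Set H, IsDPlane d Pl ∧ dBall z t (f '' P₀) Pl ≤ C * ε) ∧
          (∀ x ∈ f '' P₀, ∀ r : ℝ, 0 < r →
            ENNReal.ofReal (c * r ^ d) ≤ hContent d ((f '' P₀) ∩ closedBall x r)) := by
  have hK := flatnessConst_pos d
  refine ⟨1 / (100 * flatnessConst d), 60 * flatnessConst d, (1 / 80) ^ d, by positivity,
    by positivity, by positivity, fun H _ _ _ ε hε hε₀ P₀ X P h => ?_⟩
  rw [lt_div_iff₀ (by positivity)] at hε₀
  have hKε : 0 < flatnessConst d * ε := by positivity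
  obtain ⟨F, Q₀, hQ₀, hF, hG, hX⟩ := h.exists_isApprox hd hε.le (by linarith)
  obtain ⟨f, hf⟩ := hF.exists_isApproxLimit
  refine ⟨1 / 2, f, by norm_num, by norm_num, hf.continuousOn, hf.injOn, fun x hx => ?_,
    fun x hx y hy hxy => ⟨?_, ?_⟩, hf.iInter_closure_subset_image hQ₀ hX,
    fun z hz t ht ht1 => ?_, fun z hz t ht => ?_⟩
  · have hfx := hf.dist_le_two_mul hx 0
    rw [hF.zero, radK_zero, dist_comm] at hfx
    linarith
  · rw [Real.rpow_add_of_nonneg dist_nonneg zero_le_one (by norm_num), Real.rpow_one,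
      ← Real.sqrt_eq_rpow]
    exact hf.mul_sqrt_le_dist_limit hx hy hxy
  · rw [show (1 : ℝ) - 1 / 2 = 1 / 2 by norm_num, ← Real.sqrt_eq_rpow]
    exact hf.dist_limit_le_sqrt hx hy hxy
  · rw [mul_assoc]
    exact hf.exists_dBall_limit_le hG hz ht ht1.le
  · rw [← mul_pow, one_div_mul_eq_div]
    exact hf.le_hContent_limit hd hQ₀ hG hz ht

/-- **Theorem 3.8 (Reifenberg parametrization in Hilbert space, after David–Toro).** Given a
coherent collection of balls and planes satisfying the CCBP conditions with parameter `ε`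
small enough (depending only on `d`), there exist `τ ∈ (0,1)` and an injective continuous
map `f : P₀ → H` such that `f` moves points at most `Cε`, is bi-Hölder, its image `Σ`
contains the accumulation set `E_∞`, is `Cε`-Reifenberg flat, and is lower content
`d`-regular. -/
theorem reifenberg_parametrization
    {H : Type*} [NormedAddCommGroup H] [InnerProductSpace ℝ H]
    [CompleteSpace H] [TopologicalSpace.SeparableSpace H]
    (d : ℕ) (hd : 1 ≤ d) (hdim : (d : Cardinal) < Module.rank ℝ H) :
    ∃ ε₀ C c : ℝ, 0 < ε₀ ∧ 0 < C ∧ 0 < c ∧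
      ∀ ε : ℝ, 0 < ε → ε < ε₀ →
      ∀ (P₀ : Set H) (X : ℕ → Set H) (P : ℕ → H → Set H),
        IsDPlane d P₀ →
        -- separation of the net points at scale `k`
        (∀ k, ∀ p ∈ X k, ∀ q ∈ X k, p ≠ q → radK k ≤ dist p q) →
        -- `P_{j,k}` is a `d`-plane through `x_{j,k}`
        (∀ k, ∀ p ∈ X k, IsDPlane d (P k p) ∧ p ∈ P k p) →
        -- (a) `x_{j,k} ∈ V²_{k-1}`
        (∀ k : ℕ, 1 ≤ k → ∀ p ∈ X k, ∃ q ∈ X (k - 1), dist p q ≤ 2 * radK (k - 1)) →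
        -- (b) `dist(x_{j,0}, P₀) ≤ ε`
        (∀ p ∈ X 0, infDist p P₀ ≤ ε) →
        -- (c) `d_{x_{j,0},100}(P_{j,0}, P₀) ≤ ε`
        (∀ p ∈ X 0, dBall p 100 (P 0 p) P₀ ≤ ε) →
        -- (d) `ε_k(x_{j,k}) < ε`
        (∀ k l : ℕ, l ≤ k + 2 → k ≤ l + 2 →
          ∀ x ∈ X k, ∀ p ∈ X k, ∀ u ∈ X l,
            dist x p ≤ 100 * radK k → dist x u ≤ 100 * radK l →
            dBall u (10000 * radK l) (P k p) (P l u) < ε) →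
        ∃ (τ : ℝ) (f : H → H), 0 < τ ∧ τ < 1 ∧
          ContinuousOn f P₀ ∧ Set.InjOn f P₀ ∧
          -- (1) `|f(x) − x| ≤ Cε`
          (∀ x ∈ P₀, dist (f x) x ≤ C * ε) ∧
          -- (2) bi-Hölder estimates
          (∀ x ∈ P₀, ∀ y ∈ P₀, dist x y ≤ 1 →
            (1 / 4) * dist x y ^ (1 + τ) ≤ dist (f x) (f y) ∧
              dist (f x) (f y) ≤ 10 * dist x y ^ (1 - τ)) ∧
          -- (3) `E_∞ ⊆ Σ = f(P₀)`
          (⋂ K : ℕ, closure (⋃ k, ⋃ (_ : K ≤ k), X k)) ⊆ f '' P₀ ∧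
          -- (4) `Σ` is `Cε`-Reifenberg flat
          (∀ z ∈ f '' P₀, ∀ t : ℝ, 0 < t → t < 1 →
            ∃ Pl : Set H, IsDPlane d Pl ∧ dBall z t (f '' P₀) Pl ≤ C * ε) ∧
          -- (5) lower content regularity of `Σ`
          (∀ x ∈ f '' P₀, ∀ r : ℝ, 0 < r →
            ENNReal.ofReal (c * r ^ d) ≤ hContent d ((f '' P₀) ∩ closedBall x r)) := by
  obtain ⟨ε₀, C, c, hε₀, hC, hc, h⟩ := reifenberg_parametrization_general d hd
  exact ⟨ε₀, C, c, hε₀, hC, hc, fun ε hε hεε₀ P₀ X P hP₀ hsep hP hpar hdist hroot hlt =>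
    h H ε hε hεε₀ P₀ X P ⟨hP₀, hsep, hP, hpar, hdist, hroot, hlt⟩⟩
end

section
/- Let H be a real separable Hilbert space, d ≥ 1, A ⊆ ℝ^d a compact set and f : A → H an L-bi-Lipschitz map. Then there exist an integer m and a constant M, both depending only on d and L, and an M-bi-Lipschitz map g : ℝ^d → H × ℝ^m such that g(x) = (f(x), 0) for all x ∈ A. -/
open Metric Set MeasureTheory
open scoped ENNReal NNReal Classical

/-!
By Kirszbraun's theorem both `f : A → H` and its inverse `f(A) → ℝ^d` extend to `L`-Lipschitz maps
`F : ℝ^d → H` and `G : H → ℝ^d`. The graph `x ↦ (F x, x)` is bi-Lipschitz, and so is the shear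
`(y, x) ↦ (y, x - G y)` of `H × ℝ^d`, whose inverse is `(y, x) ↦ (y, x + G y)`. Since `G (f x) = x`
on `A`, the shear flattens the graph over `A`, and the composition is the required extension.

For Kirszbraun's theorem one has to find a common point of the balls `B(yᵢ, K |c - xᵢ|)`, where
`|yᵢ - yⱼ| ≤ K |xᵢ - xⱼ|`. For finitely many balls the minimax theorem reduces this to averages:
for weights `w` the barycentre `y` of the `yᵢ` satisfies `∑ wᵢ |y - yᵢ|² ≤ K² ∑ wᵢ |c - xᵢ|²`,
because a variance is determined by pairwise distances. Weak compactness of balls handles infinite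
families.
-/

section Kirszbraun

/-- A subset of `E × F`, viewed as a partial multivalued map from `E` to `F`, is `K`-Lipschitz.
Partial maps are encoded by their graphs so that extending one is enlarging a set. -/
def IsLipschitzRel {E F : Type*} [PseudoMetricSpace E] [PseudoMetricSpace F] (K : ℝ≥0)
    (S : Set (E × F)) : Prop :=
  ∀ p ∈ S, ∀ q ∈ S, dist p.2 q.2 ≤ K * dist p.1 q.1

namespace IsLipschitzRel

variable {E F : Type*} [PseudoMetricSpace E] [PseudoMetricSpace F] {K : ℝ≥0}

protected theorem sUnion {C : Set (Set (E × F))} (hC : IsChain (· ⊆ ·) C)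
    (h : ∀ S ∈ C, IsLipschitzRel K S) : IsLipschitzRel K (⋃₀ C) := by
  rintro p ⟨S, hS, hp⟩ q ⟨T, hT, hq⟩
  obtain hST | hTS := hC.total hS hT
  · exact h T hT p (hST hp) q hq
  · exact h S hS p hp q (hTS hq)

protected theorem insert {S : Set (E × F)} (hS : IsLipschitzRel K S) {p : E × F}
    (hp : ∀ q ∈ S, dist p.2 q.2 ≤ K * dist p.1 q.1) : IsLipschitzRel K (insert p S) := by
  rintro a (rfl | ha) b (rfl | hb)
  · simp
  · exact hp b hb
  · simpa only [dist_comm] using hp a ha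
  · exact hS a ha b hb

protected theorem graphOn {f : E → F} {s : Set E} (hf : LipschitzOnWith K f s) :
    IsLipschitzRel K (s.graphOn f) := by
  rintro _ ⟨x, hx, rfl⟩ _ ⟨y, hy, rfl⟩
  exact hf.dist_le_mul x hx y hy

end IsLipschitzRel

theorem exists_forall_nonpos_of_forall_stdSimplex {V ι : Type*} [TopologicalSpace V]
    [AddCommGroup V] [Module ℝ V] [IsTopologicalAddGroup V] [ContinuousSMul ℝ V] [Fintype ι]
    [Nonempty ι] {X : Set V} (hX : IsCompact X) {φ : ι → V → ℝ} (hφ : ∀ i, ConvexOn ℝ X (φ i))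
    (hφ' : ∀ i, LowerSemicontinuousOn (φ i) X)
    (h : ∀ w ∈ stdSimplex ℝ ι, ∃ p ∈ X, ∑ i, w i * φ i p ≤ 0) :
    ∃ p ∈ X, ∀ i, φ i p ≤ 0 := by
  have hvertex (i : ι) : Pi.single i (1 : ℝ) ∈ stdSimplex ℝ ι := single_mem_stdSimplex ℝ i
  let i₀ := Classical.arbitrary ι
  have hXne : X.Nonempty := (h _ (hvertex i₀)).imp fun _ hp => hp.1
  have hconvex (w : ι → ℝ) (hw : w ∈ stdSimplex ℝ ι) :
      ConvexOn ℝ X fun p => ∑ i, w i * φ i p := by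
    simpa [Finset.sum_fn] using Finset.sum_induction (fun i => w i • φ i) (ConvexOn ℝ X)
      (fun _ _ => ConvexOn.add) (convexOn_const 0 (hφ i₀).1) fun i _ => (hφ i).smul (hw.1 i)
  have hlsc (w : ι → ℝ) (hw : w ∈ stdSimplex ℝ ι) :
      LowerSemicontinuousOn (fun p => ∑ i, w i * φ i p) X :=
    lowerSemicontinuousOn_sum fun i _ =>
      (continuous_const_mul (w i)).comp_lowerSemicontinuousOn (hφ' i)
        (monotone_mul_left_of_nonneg (hw.1 i))
  have hconcave (p : V) : ConcaveOn ℝ (stdSimplex ℝ ι) fun w => ∑ i, w i * φ i p :=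
    (∑ i, (LinearMap.proj i : (ι → ℝ) →ₗ[ℝ] ℝ).smulRight (φ i p)).concaveOn
      (convex_stdSimplex ℝ ι) |>.congr fun w _ => by simp
  obtain ⟨p, hp, w, hw, hsaddle⟩ := Sion.exists_isSaddlePointOn hXne (hφ i₀).1 hX hlsc
    (fun w hw => (hconvex w hw).quasiconvexOn) (convex_stdSimplex ℝ ι) ⟨_, hvertex i₀⟩
    (isCompact_stdSimplex ℝ ι)
    (fun p _ => (by fun_prop : Continuous _).upperSemicontinuous.upperSemicontinuousOn _)
    (fun p _ => (hconcave p).quasiconcaveOn)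
  obtain ⟨q, hq, hwq⟩ := h w hw
  refine ⟨p, hp, fun i => ?_⟩
  simpa [Pi.single_apply] using (hsaddle q hq _ (hvertex i)).trans hwq

section InnerProductSpace

variable {ι E F : Type*} [SeminormedAddCommGroup E] [InnerProductSpace ℝ E]

theorem sum_sum_mul_norm_sub_sq (s : Finset ι) (w : ι → ℝ) (z : ι → E) :
    ∑ i ∈ s, ∑ j ∈ s, w i * w j * ‖z i - z j‖ ^ 2 =
      2 * ((∑ i ∈ s, w i) * ∑ i ∈ s, w i * ‖z i‖ ^ 2 - ‖∑ i ∈ s, w i • z i‖ ^ 2) := by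
  have hinner : ‖∑ i ∈ s, w i • z i‖ ^ 2 = ∑ i ∈ s, ∑ j ∈ s, w i * w j * inner ℝ (z i) (z j) := by
    simp only [← real_inner_self_eq_norm_sq, sum_inner, inner_sum, real_inner_smul_left,
      real_inner_smul_right]
    exact Finset.sum_congr rfl fun i _ => Finset.sum_congr rfl fun j _ => by
      rw [real_inner_comm]; ring
  have hleft : (∑ i ∈ s, w i) * ∑ i ∈ s, w i * ‖z i‖ ^ 2 =
      ∑ i ∈ s, ∑ j ∈ s, w i * w j * ‖z i‖ ^ 2 := by
    rw [mul_comm, Finset.sum_mul_sum]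
    exact Finset.sum_congr rfl fun i _ => Finset.sum_congr rfl fun j _ => by ring
  have hright : (∑ i ∈ s, w i) * ∑ i ∈ s, w i * ‖z i‖ ^ 2 =
      ∑ i ∈ s, ∑ j ∈ s, w i * w j * ‖z j‖ ^ 2 := by
    simp only [Finset.sum_mul_sum, mul_assoc]
  calc ∑ i ∈ s, ∑ j ∈ s, w i * w j * ‖z i - z j‖ ^ 2
      = ∑ i ∈ s, ∑ j ∈ s, (w i * w j * ‖z i‖ ^ 2 + w i * w j * ‖z j‖ ^ 2
          - 2 * (w i * w j * inner ℝ (z i) (z j))) :=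
        Finset.sum_congr rfl fun i _ => Finset.sum_congr rfl fun j _ => by
          rw [norm_sub_sq_real]; ring
    _ = _ := by
        simp only [Finset.sum_sub_distrib, Finset.sum_add_distrib, ← Finset.mul_sum]
        rw [← hleft, ← hright, ← hinner]
        ring

variable [SeminormedAddCommGroup F] [InnerProductSpace ℝ F]

theorem sum_mul_norm_barycenter_sub_sq_le {s : Finset ι} {w : ι → ℝ} (hw₀ : ∀ i ∈ s, 0 ≤ w i)
    (hw₁ : ∑ i ∈ s, w i = 1) {K : ℝ≥0} {x : ι → E} {y : ι → F}
    (hxy : ∀ i ∈ s, ∀ j ∈ s, dist (y i) (y j) ≤ K * dist (x i) (x j)) (c : E) :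
    ∑ i ∈ s, w i * ‖∑ j ∈ s, w j • y j - y i‖ ^ 2 ≤ K ^ 2 * ∑ i ∈ s, w i * ‖c - x i‖ ^ 2 := by
  set b := ∑ j ∈ s, w j • y j with hb
  have hmean : ∑ i ∈ s, w i • (b - y i) = 0 := by
    simp [smul_sub, ← Finset.sum_smul, hw₁, hb]
  -- Pairwise differences do not see the recentring, and the barycentre of the `b - y i` is `0`.
  have hy := sum_sum_mul_norm_sub_sq s w fun i => b - y i
  have hx := sum_sum_mul_norm_sub_sq s w fun i => c - x i
  simp only [sub_sub_sub_cancel_left, hmean, hw₁, norm_zero] at hx hy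
  have hle : ∑ i ∈ s, ∑ j ∈ s, w i * w j * ‖y j - y i‖ ^ 2 ≤
      K ^ 2 * ∑ i ∈ s, ∑ j ∈ s, w i * w j * ‖x j - x i‖ ^ 2 := by
    simp only [Finset.mul_sum, mul_left_comm (_ ^ 2 : ℝ), ← mul_pow]
    refine Finset.sum_le_sum fun i hi => Finset.sum_le_sum fun j hj => ?_
    have hw := mul_nonneg (hw₀ i hi) (hw₀ j hj)
    gcongr
    simpa only [dist_eq_norm] using hxy j hj i hi
  nlinarith [mul_nonneg (sq_nonneg (K : ℝ)) (sq_nonneg ‖∑ i ∈ s, w i • (c - x i)‖)]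

variable {K : ℝ≥0} {x : ι → E} {y : ι → F}

theorem nonempty_iInter_closedBall_of_dist_le_mul_dist [Finite ι]
    (hxy : ∀ i j, dist (y i) (y j) ≤ K * dist (x i) (x j)) (c : E) :
    (⋂ i, closedBall (y i) (K * dist c (x i))).Nonempty := by
  cases nonempty_fintype ι
  cases isEmpty_or_nonempty ι
  · simp
  let φ (i : ι) (p : F) : ℝ := dist p (y i) ^ 2 - (K * dist c (x i)) ^ 2
  obtain ⟨p, -, hp⟩ := exists_forall_nonpos_of_forall_stdSimplex (φ := φ)
    ((finite_range y).isCompact_convexHull ℝ)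
    (fun i => ((convexOn_dist (y i) (convex_convexHull ℝ _)).pow (fun _ _ => dist_nonneg) 2).sub
      (concaveOn_const _ (convex_convexHull ℝ _)))
    (fun i => (by fun_prop : Continuous (φ i)).lowerSemicontinuous.lowerSemicontinuousOn _)
    fun w hw => ⟨∑ i, w i • y i, (convex_convexHull ℝ _).sum_mem (fun i _ => hw.1 i) hw.2
      fun i _ => subset_convexHull ℝ _ (mem_range_self i), by
        simpa [φ, dist_eq_norm, mul_sub, mul_pow, Finset.mul_sum, mul_left_comm] using
          sum_mul_norm_barycenter_sub_sq_le (fun i _ => hw.1 i) hw.2 (fun i _ j _ => hxy i j) c⟩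
  exact ⟨p, mem_iInter.2 fun i => le_of_sq_le_sq (sub_nonpos.1 (hp i)) (by positivity)⟩

end InnerProductSpace

theorem nonempty_iInter_closedBall_strongDual {𝕜 V ι : Type*} [NontriviallyNormedField 𝕜]
    [ProperSpace 𝕜] [SeminormedAddCommGroup V] [NormedSpace 𝕜 V] {y : ι → StrongDual 𝕜 V}
    {r : ι → ℝ} (h : ∀ s : Finset ι, (⋂ i ∈ s, closedBall (y i) (r i)).Nonempty) :
    (⋂ i, closedBall (y i) (r i)).Nonempty := by
  rcases isEmpty_or_nonempty ι with _ | ⟨⟨i₀⟩⟩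
  · simp
  obtain ⟨q, -, hq⟩ := (WeakDual.isCompact_closedBall (y i₀) (r i₀)).inter_iInter_nonempty
    (fun i => WeakDual.toStrongDual ⁻¹' closedBall (y i) (r i))
    (fun i => WeakDual.isClosed_closedBall _ _) fun s => by
      obtain ⟨p, hp⟩ := h (insert i₀ s)
      rw [Finset.set_biInter_insert] at hp
      exact ⟨StrongDual.toWeakDual p, by simpa using hp⟩
  exact ⟨WeakDual.toStrongDual q, by simpa using hq⟩

theorem nonempty_iInter_closedBall_of_finite_inter {𝕜 F ι : Type*} [RCLike 𝕜]
    [NormedAddCommGroup F] [InnerProductSpace 𝕜 F] [CompleteSpace F] {y : ι → F} {r : ι → ℝ}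
    (h : ∀ s : Finset ι, (⋂ i ∈ s, closedBall (y i) (r i)).Nonempty) :
    (⋂ i, closedBall (y i) (r i)).Nonempty := by
  let e := InnerProductSpace.toDual 𝕜 F
  obtain ⟨q, hq⟩ := nonempty_iInter_closedBall_strongDual (y := e ∘ y) (r := r) fun s => by
    obtain ⟨p, hp⟩ := h s
    exact ⟨e p, by simpa [e.dist_map] using hp⟩
  refine ⟨e.symm q, ?_⟩
  simpa [← e.dist_map] using hq

variable {E F : Type*} [SeminormedAddCommGroup E] [InnerProductSpace ℝ E]
  [NormedAddCommGroup F] [InnerProductSpace ℝ F] [CompleteSpace F] {K : ℝ≥0}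

theorem IsLipschitzRel.exists_forall_dist_le {S : Set (E × F)} (hS : IsLipschitzRel K S) (x : E) :
    ∃ y, ∀ p ∈ S, dist y p.2 ≤ K * dist x p.1 := by
  obtain ⟨y, hy⟩ := nonempty_iInter_closedBall_of_finite_inter (𝕜 := ℝ)
    (y := fun p : S => p.1.2) (r := fun p : S => K * dist x p.1.1) fun s => by
      obtain ⟨y, hy⟩ := nonempty_iInter_closedBall_of_dist_le_mul_dist (x := fun p : s => p.1.1.1)
        (y := fun p : s => p.1.1.2) (fun p q => hS _ p.1.2 _ q.1.2) x
      exact ⟨y, mem_iInter₂.2 fun p hp => mem_iInter.1 hy ⟨p, hp⟩⟩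
  exact ⟨y, fun p hp => mem_iInter.1 hy ⟨p, hp⟩⟩

theorem exists_lipschitzWith_eqOn {f : E → F} {s : Set E} (hf : LipschitzOnWith K f s) :
    ∃ g : E → F, LipschitzWith K g ∧ EqOn f g s := by
  obtain ⟨T, hsT, hT⟩ := zorn_subset_nonempty {T : Set (E × F) | IsLipschitzRel K T}
    (fun C hC hchain _ => ⟨⋃₀ C, .sUnion hchain hC, fun _ => subset_sUnion_of_mem⟩)
    (s.graphOn f) (.graphOn hf)
  have htotal (x : E) : ∃ y, (x, y) ∈ T := by
    obtain ⟨y, hy⟩ := hT.prop.exists_forall_dist_le x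
    exact ⟨y, hT.le_of_ge (hT.prop.insert hy) (subset_insert _ _) (mem_insert _ _)⟩
  choose g hg using htotal
  refine ⟨g, .of_dist_le_mul fun x y => hT.prop _ (hg x) _ (hg y), fun x hx => ?_⟩
  exact dist_le_zero.1 <| by simpa using hT.prop _ (hsT ⟨x, hx, rfl⟩) _ (hg x)

theorem exists_lipschitzWith_leftInvOn {f : F → E} {s : Set F}
    (hf : AntilipschitzWith K (s.domRestrict f)) :
    ∃ g : E → F, LipschitzWith K g ∧ LeftInvOn g f s := by
  have hinj : InjOn f s := injOn_iff_injective.2 hf.injective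
  have hinv : LipschitzOnWith K (Function.invFunOn f s) (f '' s) := by
    rw [lipschitzOnWith_iff_restrict]
    exact hf.to_rightInvOn' (fun y hy => Function.invFunOn_mem hy)
      fun y hy => Function.invFunOn_eq hy
  obtain ⟨g, hg, hEq⟩ := exists_lipschitzWith_eqOn hinv
  exact ⟨g, hg, fun x hx => (hEq (mem_image_of_mem f hx)).symm.trans (hinj.leftInvOn_invFunOn hx)⟩

end Kirszbraun

section Shear

open WithLp

variable {α E F : Type*}

/-- The shear `(y, x) ↦ (y, x + G y)` of `F × E` along a nonlinear map `G : F → E`, which moves the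
graph of `-G` onto `F × {0}`. -/
def shear [Add E] (p : ℝ≥0∞) (G : F → E) (z : WithLp p (F × E)) : WithLp p (F × E) :=
  toLp p (z.fst, z.snd + G z.fst)

theorem leftInverse_shear_neg [AddGroup E] {p : ℝ≥0∞} (G : F → E) :
    Function.LeftInverse (shear p (-G)) (shear p G) := fun z =>
  ofLp_injective p <| by simp [shear, Prod.ext_iff]

variable [PseudoEMetricSpace α] [SeminormedAddCommGroup E] [SeminormedAddCommGroup F]
  {p : ℝ≥0∞} [Fact (1 ≤ p)] {K K' : ℝ≥0}

theorem lipschitzWith_toLp_prodMk {f : α → F} {g : α → E} (hf : LipschitzWith K f)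
    (hg : LipschitzWith K' g) : LipschitzWith (K + K') fun x => toLp p (f x, g x) := by
  have hinl : LipschitzWith K fun x => toLp p (f x, (0 : E)) := fun x y => by
    simpa using hf x y
  have hinr : LipschitzWith K' fun x => toLp p ((0 : F), g x) := fun x y => by
    simpa using hg x y
  simpa [← toLp_add] using hinl.add hinr

theorem antilipschitzWith_toLp_prodMk {g : α → E} (hg : AntilipschitzWith K g) (f : α → F) :
    AntilipschitzWith K fun x => toLp p (f x, g x) := fun x y =>
  (hg x y).trans <| by gcongr; exact edist_snd_le (toLp p (f x, g x)) (toLp p (f y, g y))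

variable {G : F → E}

theorem lipschitzWith_shear (hG : LipschitzWith K G) : LipschitzWith (1 + K) (shear p G) := by
  have hinr : LipschitzWith K fun z : WithLp p (F × E) => toLp p ((0 : F), G z.fst) :=
    fun z z' => by
      rw [edist_toLp_snd]
      exact (hG _ _).trans (by gcongr; exact edist_fst_le z z')
  convert! LipschitzWith.id.add hinr using 1
  funext z
  refine ofLp_injective p ?_
  simp [shear, Prod.ext_iff]

theorem antilipschitzWith_shear (hG : LipschitzWith K G) :
    AntilipschitzWith (1 + K) (shear p G) := by
  have hneg : LipschitzWith (1 + K) (shear p (-G)) := lipschitzWith_shear hG.neg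
  exact hneg.to_rightInverse (leftInverse_shear_neg G)

end Shear

theorem bilipschitz_extension_general {E H : Type*} [NormedAddCommGroup E] [InnerProductSpace ℝ E]
    [CompleteSpace E] [NormedAddCommGroup H] [InnerProductSpace ℝ H] [CompleteSpace H]
    (p : ℝ≥0∞) [Fact (1 ≤ p)] {L : ℝ} (hL : 0 < L) {A : Set E} {f : E → H}
    (hf : ∀ x ∈ A, ∀ y ∈ A,
      dist x y / L ≤ dist (f x) (f y) ∧ dist (f x) (f y) ≤ L * dist x y) :
    ∃ g : E → WithLp p (H × E),
      (∀ x y, dist x y / (1 + L) ^ 2 ≤ dist (g x) (g y) ∧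
        dist (g x) (g y) ≤ (1 + L) ^ 2 * dist x y) ∧
      ∀ x ∈ A, g x = WithLp.toLp p (f x, 0) := by
  lift L to ℝ≥0 using hL.le
  obtain ⟨F, hF, hfF⟩ := exists_lipschitzWith_eqOn (K := L) (f := f) (s := A) <|
    .of_dist_le_mul fun x hx y hy => (hf x hx y hy).2
  obtain ⟨G, hG, hGf⟩ := exists_lipschitzWith_leftInvOn (K := L) (f := f) (s := A) <|
    .of_le_mul_dist fun x y => (div_le_iff₀' hL).1 (hf x x.2 y y.2).1
  let g (x : E) : WithLp p (H × E) := shear p (-G) (WithLp.toLp p (F x, x))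
  have hlip : LipschitzWith ((1 + L) * (L + 1)) g :=
    (lipschitzWith_shear hG.neg).comp (lipschitzWith_toLp_prodMk hF .id)
  have hanti : AntilipschitzWith (1 * (1 + L)) g :=
    (antilipschitzWith_shear hG.neg).comp (antilipschitzWith_toLp_prodMk .id F)
  refine ⟨g, fun x y => ⟨?_, ?_⟩, fun x hx => ?_⟩
  · rw [div_le_iff₀' (by positivity)]
    calc dist x y ≤ (1 + L) * dist (g x) (g y) := by simpa using hanti.le_mul_dist x y
      _ ≤ (1 + L) ^ 2 * dist (g x) (g y) := by gcongr; exact le_self_pow₀ (by simp) two_ne_zero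
  · calc dist (g x) (g y) ≤ (1 + L) * (L + 1) * dist x y := mod_cast hlip.dist_le_mul x y
      _ = (1 + L) ^ 2 * dist x y := by ring
  · simp [g, shear, ← hfF hx, hGf hx]

/-- **Lemma 7.3 (bi-Lipschitz extension, after David–Semmes).** Let `A ⊆ ℝ^d` be compact
and `f : A → H` an `L`-bi-Lipschitz map. Then there are an integer `m` and a constant `M`,
depending only on `d` and `L`, and an `M`-bi-Lipschitz map `g : ℝ^d → H × ℝ^m` (with the
product Hilbert norm) with `g(x) = (f(x), 0)` for all `x ∈ A`. -/
theorem bilipschitz_extension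
    {H : Type*} [NormedAddCommGroup H] [InnerProductSpace ℝ H]
    [CompleteSpace H] [TopologicalSpace.SeparableSpace H]
    (d : ℕ) (hd : 1 ≤ d) (L : ℝ) (hL : 1 ≤ L) :
    ∃ (m : ℕ) (M : ℝ), 1 ≤ M ∧
      ∀ (A : Set (EuclideanSpace ℝ (Fin d))) (f : EuclideanSpace ℝ (Fin d) → H),
        IsCompact A →
        (∀ x ∈ A, ∀ y ∈ A,
          dist x y / L ≤ dist (f x) (f y) ∧ dist (f x) (f y) ≤ L * dist x y) →
        ∃ g : EuclideanSpace ℝ (Fin d) → WithLp 2 (H × EuclideanSpace ℝ (Fin m)),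
          (∀ x y, dist x y / M ≤ dist (g x) (g y) ∧ dist (g x) (g y) ≤ M * dist x y) ∧
          ∀ x ∈ A, g x = (WithLp.equiv 2 (H × EuclideanSpace ℝ (Fin m))).symm (f x, 0) :=
  ⟨d, (1 + L) ^ 2, by nlinarith, fun _ _ _ hf =>
    bilipschitz_extension_general 2 (zero_lt_one.trans_le hL) hf⟩
end
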